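/- arXiv:math/0303074 — 3 statements merged into one kernel-verified Lean document; each statement's English description precedes it below -/
import Mathlib

section
/- Every finite Galois extension K of the rational numbers ℚ whose Galois group Gal(K/ℚ) is abelian embeds into a cyclotomic field: there exists a positive integer N and a ℚ-algebra homomorphism from K into the N-th cyclotomic field ℚ(ζ_N). -/
/-!
The proof is elementary: it uses inertia groups and Minkowski's theorem that every number field other
than `ℚ` is ramified somewhere (equivalently, inertia groups generate the Galois group over `ℚ`,
`KW.eq_top_of_inertia_le`), but no class field theory and no completions.

*Reductions.* An abelian field is a compositum of abelian fields of prime power degree, and a compositum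
of cyclotomic fields is cyclotomic (`KW.Cyc.of_sup_eq_top`). So let `K` be abelian of degree a power of
a prime `ℓ`. If a prime `q ≠ ℓ` ramifies in `K`, its inertia group `J` in `M = K(ζ_q)` is tame, and
because the Galois group is abelian, Frobenius invariance of the tame character gives `|J| ≤ q - 1`
(`KW.card_inertia_le`). It follows that `M` is the compositum of `M^J` and `ℚ(ζ_q)`; the field `M^J` is
unramified at `q`, has degree a power of `ℓ`, and acquires no new ramification
(`KW.cyc_of_unramified_outside`). After finitely many steps only `ℓ` ramifies.

*One ramified prime.* Let `T` be abelian of degree dividing `ℓ ^ m`, ramified only at `ℓ`. Adjoin a root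
of unity of order `n = ℓ ^ (m + 1)`, or `n = 2 ^ (m + 3)` if `ℓ = 2`, to get `M = T(ζ_n)`. It suffices
to show `[M : ℚ] ≤ φ(n)`. The Galois group modulo a small subgroup (of order at most `ℓ - 1`, or
generated by complex conjugation if `ℓ = 2`) has exponent dividing `ℓ ^ m`, or `2 ^ (m + 1)`, so the
bound holds as soon as this quotient is cyclic, that is, has at most one subgroup of index `ℓ`
(`KW.card_le_of_unique_index`). For `ℓ = 2` such a subgroup corresponds to a real quadratic field
ramified only at `2`, which is `ℚ(√2)` (`KW.exists_sqrt_two`).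

*The odd case.* For odd `ℓ`, two subgroups of index `ℓ` would give an extension of `ℚ` with group
`(ℤ/ℓ)²`, totally ramified at `ℓ`. This is impossible (`KW.TotRam.contradiction`). Let `P` be the prime
above `ℓ` and `π` a uniformizer. The whole group acts trivially on `P / P²`, and by the pigeonhole
principle some `τ ≠ 1` satisfies `τ π - π ∈ P³`. Let `y` be the norm of `π` to a subfield of degree `ℓ`
on which `τ` acts nontrivially (times an integer prime to `ℓ`). Then `τ y - y ∈ P^(3ℓ)`, so the
characteristic polynomial `F` of `y` has `F'(y) ∈ P^(3ℓ(ℓ-1)) ⊆ P^(2ℓ²) = ℓ² R_P`. But `y` is a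
uniformizer of the subfield, so its powers are independent modulo `ℓ`, and the leading coefficient `ℓ` of
`F'` would be divisible by `ℓ²`.
-/

set_option linter.unusedSectionVars false

universe u

namespace KW

/-! ### Orders at a prime and expansions in a uniformizer -/

section
open Polynomial

/-- The `P`-adic order of an element. -/
noncomputable def ord {R : Type*} [CommRing R] (P : Ideal R) (x : R) : ℕ∞ :=
  emultiplicity P (Ideal.span {x})

section ord
variable {R : Type*} [CommRing R] [IsDedekindDomain R] {P : Ideal R}

lemma le_ord_iff {k : ℕ} {x : R} : (k : ℕ∞) ≤ ord P x ↔ x ∈ P ^ k := by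
  rw [ord, ← pow_dvd_iff_le_emultiplicity, Ideal.dvd_iff_le, Ideal.span_singleton_le_iff_mem]

lemma ord_eq_iff {k : ℕ} {x : R} : ord P x = k ↔ x ∈ P ^ k ∧ x ∉ P ^ (k + 1) := by
  rw [← le_ord_iff, ← le_ord_iff, not_le, Nat.cast_add, Nat.cast_one,
    ENat.lt_add_one_iff (ENat.natCast_ne_top k), le_antisymm_iff, and_comm]

lemma ord_mul (hP : P.IsPrime) (hP0 : P ≠ ⊥) (x y : R) : ord P (x * y) = ord P x + ord P y := by
  rw [ord, ← Ideal.span_singleton_mul_span_singleton]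
  exact emultiplicity_mul (Ideal.prime_of_isPrime hP0 hP)

lemma ord_one (hP : P.IsPrime) : ord P (1 : R) = 0 := by
  have := (ord_eq_iff (P := P) (k := 0) (x := 1)).2 ⟨by simp, by
    simpa using (Ideal.ne_top_iff_one _).1 hP.ne_top⟩
  simpa using this

lemma ord_pow (hP : P.IsPrime) (hP0 : P ≠ ⊥) (x : R) (n : ℕ) : ord P (x ^ n) = n * ord P x := by
  induction n with
  | zero => simp [ord_one hP]
  | succ n ih => rw [pow_succ, ord_mul hP hP0, ih]; push_cast; ring

lemma ord_prod (hP : P.IsPrime) (hP0 : P ≠ ⊥) {ι : Type*} (s : Finset ι) (f : ι → R) :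
    ord P (∏ i ∈ s, f i) = ∑ i ∈ s, ord P (f i) := by
  classical
  induction s using Finset.induction_on with
  | empty => simp [ord_one hP]
  | insert a s ha ih => rw [Finset.prod_insert ha, Finset.sum_insert ha, ord_mul hP hP0, ih]

end ord

section expansions
variable {R : Type*} [CommRing R] [IsDedekindDomain R] {P : Ideal R} {ℓ : ℕ}

lemma int_mem_iff (hP : P.IsPrime) (hℓ : ℓ.Prime) (hm : (ℓ : R) ∈ P) (a : ℤ) :
    (a : R) ∈ P ↔ (ℓ : ℤ) ∣ a := by
  constructor
  · intro ha
    by_contra hn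
    have : IsCoprime (ℓ : ℤ) a := (Nat.prime_iff_prime_int.1 hℓ).irreducible.coprime_iff_not_dvd.2 hn
    obtain ⟨u, w, h⟩ := this
    apply (Ideal.ne_top_iff_one _).1 hP.ne_top
    have h2 : ((u : R) * (ℓ : R) + w * a) = 1 := by exact_mod_cast congrArg (Int.cast : ℤ → R) h
    rw [← h2]
    exact P.add_mem (P.mul_mem_left _ hm) (P.mul_mem_left _ ha)
  · rintro ⟨b, rfl⟩
    push_cast
    exact P.mul_mem_right _ hm

lemma ord_int (hP : P.IsPrime) (hℓ : ℓ.Prime) (hm : (ℓ : R) ∈ P) {a : ℤ} (ha : ¬ (ℓ : ℤ) ∣ a) :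
    ord P (a : R) = 0 := by
  have := (ord_eq_iff (P := P) (k := 0) (x := (a : R))).2 ⟨by simp, by
    simpa using fun h => ha ((int_mem_iff hP hℓ hm a).1 h)⟩
  simpa using this

/-- If `y` has order `e` and `ℓ` has order `e * N`, then `1, y, …, y ^ (N - 1)` are independent modulo
`ℓ`: the terms `a j * y ^ j` with `ℓ ∤ a j` have the distinct orders `e * j < e * N`, so no
cancellation can make the sum divisible by `ℓ`. -/
lemma dvd_coeff (hP : P.IsPrime) (hP0 : P ≠ ⊥) (hℓ : ℓ.Prime) {e N : ℕ} (he : 0 < e)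
    (hN : 0 < N) {y : R} (hy : ord P y = e) (hℓP : ord P (ℓ : R) = (e * N : ℕ)) (a : ℕ → ℤ)
    (ha : ∑ j ∈ Finset.range N, (a j : R) * y ^ j ∈ P ^ (e * N)) :
    ∀ j < N, (ℓ : ℤ) ∣ a j := by
  have hℓ2 : (ℓ : R) ∈ P ^ (e * N) := (ord_eq_iff.1 hℓP).1
  have hm : (ℓ : R) ∈ P := Ideal.pow_le_self (by positivity) hℓ2
  intro j
  induction j using Nat.strong_induction_on with
  | _ j ih =>
  intro hj
  by_contra hn
  have hle : e * (j + 1) ≤ e * N := Nat.mul_le_mul_left _ hj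
  have hmem : (a j : R) * y ^ j ∈ P ^ (e * (j + 1)) := by
    have h1 := Finset.add_sum_erase (Finset.range N) (fun i => (a i : R) * y ^ i)
      (Finset.mem_range.2 hj)
    rw [← eq_sub_iff_add_eq] at h1
    rw [show (a j : R) * y ^ j = _ from h1]
    refine Ideal.sub_mem _ (Ideal.pow_le_pow_right hle ha) (Ideal.sum_mem _ fun i hi => ?_)
    rw [Finset.mem_erase, Finset.mem_range] at hi
    rcases lt_or_gt_of_ne hi.1 with h | h
    · obtain ⟨b, hb⟩ := ih i h hi.2
      rw [hb]
      push_cast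
      rw [mul_assoc]
      exact Ideal.mul_mem_right _ _ (Ideal.pow_le_pow_right hle hℓ2)
    · refine Ideal.mul_mem_left _ _ ?_
      have : y ^ i ∈ (P ^ e) ^ i := Ideal.pow_mem_pow (ord_eq_iff.1 hy).1 i
      rw [← pow_mul] at this
      exact Ideal.pow_le_pow_right (Nat.mul_le_mul_left _ h) this
  rw [← le_ord_iff, ord_mul hP hP0, ord_pow hP hP0, ord_int hP hℓ hm hn, hy, zero_add] at hmem
  have : e * (j + 1) ≤ j * e := by exact_mod_cast hmem
  nlinarith

/-- The powers of a uniformizer represent `P ^ s / P ^ (s + 1)`, the residue field being prime. -/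
lemma exists_int_approx (hP : P.IsPrime) (hP0 : P ≠ ⊥) (hres : ∀ x : R, ∃ c : ℤ, x - c ∈ P)
    {π : R} (hπ : ord P π = 1) {s : ℕ} {x : R} (hx : x ∈ P ^ s) :
    ∃ c : ℤ, x - c * π ^ s ∈ P ^ (s + 1) := by
  have h1 : ord P (π ^ s) = s := by rw [ord_pow hP hP0, hπ, mul_one]
  obtain ⟨h2, h3⟩ := ord_eq_iff.1 h1
  obtain ⟨d, e, he, hde⟩ := Ideal.exists_mul_add_mem_pow_succ hP0 _ _ h2 h3 hx
  obtain ⟨c, hc⟩ := hres d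
  refine ⟨c, ?_⟩
  have : x - c * π ^ s = (d - c) * π ^ s + e := by rw [← hde]; ring
  rw [this]
  refine Ideal.add_mem _ ?_ he
  rw [pow_succ']
  exact Ideal.mul_mem_mul hc h2

end expansions

end

/-! ### Totally ramified elementary abelian extensions of degree `ℓ ^ 2` -/

section
open Polynomial

/-- A totally ramified abelian situation with residue field `𝔽_ℓ`: the finite group `G` acts
faithfully on the Dedekind domain `R` with invariants `ℤ`, it equals its inertia group at the prime
`P` above `ℓ`, the residue field at `P` is `𝔽_ℓ`, the group has order `ℓ ^ 2` and exponent `ℓ`, as a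
`ℤ`-module `R` is finite of rank `ℓ ^ 2`, the order of `ℓ` at `P` is `ℓ ^ 2`, and `π` is a uniformizer
at `P`. It describes the ring of integers of a totally ramified elementary abelian extension of `ℚ`
of degree `ℓ ^ 2`, with its Galois group; `TotRam.contradiction` shows that there is none for odd
`ℓ`. -/
structure TotRam {R : Type*} [CommRing R] (G : Type*) [CommGroup G]
    [MulSemiringAction G R] (P : Ideal R) (ℓ : ℕ) (π : R) : Prop where
  prime : P.IsPrime
  ne_bot : P ≠ ⊥
  hℓ : ℓ.Prime
  exp : ∀ g : G, g ^ ℓ = 1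
  card : Nat.card G = ℓ ^ 2
  faithful : ∀ g : G, (∀ x : R, g • x = x) → g = 1
  inv : ∀ x : R, (∀ g : G, g • x = x) → ∃ c : ℤ, (c : R) = x
  res : ∀ x : R, ∃ c : ℤ, x - c ∈ P
  inertia : ∀ (g : G) (x : R), g • x - x ∈ P
  ordℓ : ord P (ℓ : R) = (ℓ ^ 2 : ℕ)
  ordπ : ord P π = 1
  finite : Module.Finite ℤ R
  finrank : Module.finrank ℤ R = ℓ ^ 2

lemma smul_int {R G : Type*} [CommRing R] [Group G] [MulSemiringAction G R] (g : G) (c : ℤ) :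
    g • (c : R) = c := map_intCast (MulSemiringAction.toRingHom G R g) c

namespace TotRam
variable {R : Type*} [CommRing R] [IsDedekindDomain R] {G : Type*} [CommGroup G]
  [MulSemiringAction G R] {P : Ideal R} {ℓ : ℕ} {π : R}

lemma ℓ_mem (h : TotRam G P ℓ π) : (ℓ : R) ∈ P :=
  Ideal.pow_le_self (pow_ne_zero 2 h.hℓ.ne_zero) (ord_eq_iff.1 h.ordℓ).1

lemma π_mem (h : TotRam G P ℓ π) : π ∈ P := by
  have := (ord_eq_iff (k := 1).1 (by simpa using h.ordπ)).1
  rwa [pow_one] at this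

lemma smul_mem (h : TotRam G P ℓ π) (g : G) {x : R} (hx : x ∈ P) : g • x ∈ P := by
  have := P.add_mem (h.inertia g x) hx
  simpa using this

lemma smul_mem_pow (h : TotRam G P ℓ π) (g : G) {x : R} {k : ℕ} (hx : x ∈ P ^ k) :
    g • x ∈ P ^ k := by
  have h1 : P.map (MulSemiringAction.toRingHom G R g) ≤ P :=
    Ideal.map_le_iff_le_comap.2 fun y hy => h.smul_mem g hy
  have h2 := Ideal.mem_map_of_mem (MulSemiringAction.toRingHom G R g) hx
  rw [Ideal.map_pow] at h2
  exact Ideal.pow_right_mono h1 k h2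

lemma ord_smul (h : TotRam G P ℓ π) (g : G) (x : R) : ord P (g • x) = ord P x := by
  have key : ∀ (g : G) (x : R), ord P x ≤ ord P (g • x) := fun g x =>
    ENat.forall_natCast_le_iff_le.1 fun k hk => le_ord_iff.2 (h.smul_mem_pow g (le_ord_iff.1 hk))
  refine le_antisymm ?_ (key g x)
  simpa using key g⁻¹ (g • x)

lemma fermat (h : TotRam G P ℓ π) {c : ℤ} (hc : (ℓ : ℤ) ∣ c ^ ℓ - 1) : (ℓ : ℤ) ∣ c - 1 := by
  have := Fact.mk h.hℓ
  rw [← ZMod.intCast_zmod_eq_zero_iff_dvd] at hc ⊢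
  push_cast at hc ⊢
  rwa [ZMod.pow_card] at hc

/-- The inertia group is its own wild part: it acts trivially on `P / P ^ 2`, because the
eigenvalue of `g` on this line is an `ℓ`-th root of unity in `𝔽_ℓ`. -/
lemma smul_sub_mem_sq (h : TotRam G P ℓ π) (g : G) : g • π - π ∈ P ^ 2 := by
  obtain ⟨c, hc⟩ := exists_int_approx h.prime h.ne_bot h.res h.ordπ (s := 1) (x := g • π)
    (by simpa using h.smul_mem g h.π_mem)
  rw [pow_one] at hc
  have hk : ∀ k : ℕ, g ^ k • π - c ^ k * π ∈ P ^ 2 := by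
    intro k
    induction k with
    | zero => simp
    | succ k ih =>
      have h1 := h.smul_mem_pow g ih
      have h2 : g ^ (k + 1) • π - c ^ (k + 1) * π
          = g • (g ^ k • π - c ^ k * π) + c ^ k * (g • π - c * π) := by
        rw [smul_sub, smul_mul', smul_pow', smul_int, pow_succ', mul_smul]; ring
      rw [h2]
      exact Ideal.add_mem _ h1 (Ideal.mul_mem_left _ _ hc)
  have h3 := hk ℓ
  rw [h.exp, one_smul] at h3
  have h4 : (ℓ : ℤ) ∣ c - 1 := by
    apply h.fermat
    by_contra hn
    have : ord P (((c ^ ℓ - 1 : ℤ) : R) * π) = 1 := by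
      rw [ord_mul h.prime h.ne_bot, ord_int h.prime h.hℓ h.ℓ_mem hn, h.ordπ, zero_add]
    have h5 : (2 : ℕ) ≤ ord P (((c ^ ℓ - 1 : ℤ) : R) * π) := by
      rw [le_ord_iff, ← neg_mem_iff]
      convert h3 using 1
      push_cast; ring
    rw [this] at h5
    exact absurd h5 (by decide)
  have h6 : g • π - π = (g • π - c * π) + ((c - 1 : ℤ) : R) * π := by push_cast; ring
  rw [h6]
  refine Ideal.add_mem _ hc ?_
  rw [pow_two]
  exact Ideal.mul_mem_mul ((int_mem_iff h.prime h.hℓ h.ℓ_mem _).2 h4) h.π_mem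

lemma smul_pow_sub_mem (h : TotRam G P ℓ π) (g : G) (k : ℕ) :
    g • π ^ k - π ^ k ∈ P ^ (k + 1) := by
  induction k with
  | zero => simp
  | succ k ih =>
    have : g • π ^ (k + 1) - π ^ (k + 1)
        = (g • π ^ k) * (g • π - π) + (g • π ^ k - π ^ k) * π := by
      rw [pow_succ, smul_mul']; ring
    rw [this]
    refine Ideal.add_mem _ ?_ ?_
    · rw [show k + 1 + 1 = k + 2 by ring, pow_add]
      exact Ideal.mul_mem_mul (h.smul_mem_pow g (Ideal.pow_mem_pow h.π_mem k)) (h.smul_sub_mem_sq g)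
    · rw [pow_succ]
      exact Ideal.mul_mem_mul ih h.π_mem

/-- The group acts trivially on each `P ^ k / P ^ (k + 1)`. -/
lemma smul_sub_mem (h : TotRam G P ℓ π) (g : G) {k : ℕ} {x : R} (hx : x ∈ P ^ k) :
    g • x - x ∈ P ^ (k + 1) := by
  obtain ⟨c, hc⟩ := exists_int_approx h.prime h.ne_bot h.res h.ordπ hx
  have : g • x - x = c * (g • π ^ k - π ^ k) + (g • (x - c * π ^ k) - (x - c * π ^ k)) := by
    rw [smul_sub, smul_mul', smul_int]; ring
  rw [this]
  exact Ideal.add_mem _ (Ideal.mul_mem_left _ _ (h.smul_pow_sub_mem g k))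
    (Ideal.sub_mem _ (h.smul_mem_pow g hc) hc)

/-- The second ramification group is nontrivial: the map `g ↦ (g π - π) / π ^ 2` from the group, which
has `ℓ ^ 2` elements, to the residue field `𝔽_ℓ` is not injective. -/
lemma exists_ne_one (h : TotRam G P ℓ π) : ∃ τ : G, τ ≠ 1 ∧ τ • π - π ∈ P ^ 3 := by
  have hex : ∀ g : G, ∃ c : ℤ, g • π - π - c * π ^ 2 ∈ P ^ 3 := fun g =>
    exists_int_approx h.prime h.ne_bot h.res h.ordπ (h.smul_sub_mem_sq g)
  choose c hc using hex
  have := Fact.mk h.hℓ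
  have : Finite G := Nat.finite_of_card_ne_zero (by
    rw [h.card]; exact pow_ne_zero _ h.hℓ.ne_zero)
  have hni : ¬ Function.Injective (fun g : G => (c g : ZMod ℓ)) := fun hinj => by
    have := Nat.card_le_card_of_injective _ hinj
    rw [h.card, Nat.card_zmod] at this
    nlinarith [h.hℓ.two_le]
  simp only [Function.Injective, not_forall] at hni
  obtain ⟨g, g', hgg, hne⟩ := hni
  refine ⟨g'⁻¹ * g, fun h1 => hne (by rw [inv_mul_eq_one] at h1; exact h1.symm), ?_⟩
  have hd : (ℓ : ℤ) ∣ c g - c g' := by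
    rw [← ZMod.intCast_zmod_eq_zero_iff_dvd]; push_cast; rw [hgg, sub_self]
  have h2 : g • π - g' • π ∈ P ^ 3 := by
    have : g • π - g' • π = (g • π - π - c g * π ^ 2) - (g' • π - π - c g' * π ^ 2)
        + ((c g - c g' : ℤ) : R) * π ^ 2 := by push_cast; ring
    rw [this]
    refine Ideal.add_mem _ (Ideal.sub_mem _ (hc g) (hc g')) ?_
    rw [pow_succ' P]
    exact Ideal.mul_mem_mul ((int_mem_iff h.prime h.hℓ h.ℓ_mem _).2 hd)
      (Ideal.pow_mem_pow h.π_mem 2)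
  have h3 := h.smul_mem_pow g'⁻¹ h2
  rwa [smul_sub, inv_smul_smul, ← mul_smul] at h3

/-- The powers of `π` span a subgroup of `R` whose index is prime to `ℓ`; this replaces the statement
that a totally ramified extension of local rings is generated by a uniformizer. -/
lemma exists_aeval [CharZero R] (h : TotRam G P ℓ π) (x : R) :
    ∃ m : ℕ, ¬ ℓ ∣ m ∧ ∃ f : ℤ[X], aeval π f = (m : R) * x := by
  have hℓ0 := h.hℓ.pos
  set n := ℓ ^ 2 with hn
  have hn0 : 0 < n := by positivity
  have hD := dvd_coeff h.prime h.ne_bot h.hℓ (e := 1) (N := n) one_pos hn0 (y := π)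
    (by simpa using h.ordπ) (by rw [one_mul]; exact h.ordℓ)
  have hℓn : (ℓ : R) ∈ P ^ n := (ord_eq_iff.1 h.ordℓ).1
  have hℓR : (ℓ : R) ≠ 0 := by exact_mod_cast h.hℓ.ne_zero
  -- a relation with `m ≠ 0` and minimal `m`
  let Q : ℕ → Prop := fun m => m ≠ 0 ∧ ∃ a : ℕ → ℤ, ∑ j ∈ Finset.range n, (a j : R) * π ^ j = m * x
  have hQ : ∃ m, Q m := by
    have hnl : ¬ LinearIndependent ℤ (fun i : Fin (n + 1) => if (i : ℕ) = n then x else π ^ (i : ℕ)) := by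
      intro hli
      have := h.finite
      have := hli.fintype_card_le_finrank
      rw [h.finrank, Fintype.card_fin] at this
      omega
    rw [Fintype.not_linearIndependent_iff] at hnl
    obtain ⟨g, hg, i0, hi0⟩ := hnl
    rw [Fin.sum_univ_castSucc] at hg
    have hg' : ∑ i : Fin n, (g i.castSucc : R) * π ^ (i : ℕ) = - ((g (Fin.last n) : R) * x) := by
      rw [eq_neg_iff_add_eq_zero, ← hg]
      congr 1
      · refine Finset.sum_congr rfl fun i _ => ?_
        rw [if_neg (by simpa using i.2.ne), zsmul_eq_mul]; rfl
      · simp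
    -- a nonzero relation must involve `x`
    set a : ℕ → ℤ := fun j => if hj : j < n then g (Fin.castSucc ⟨j, hj⟩) else 0 with ha
    have hsum : ∑ j ∈ Finset.range n, (a j : R) * π ^ j = - ((g (Fin.last n) : R) * x) := by
      rw [← hg', Finset.sum_range]
      refine Finset.sum_congr rfl fun i _ => ?_
      simp only [ha, dif_pos i.2, Fin.eta]
    have hlast : g (Fin.last n) ≠ 0 := by
      intro h0
      rw [h0, Int.cast_zero, zero_mul, neg_zero] at hsum
      have hall : ∀ k : ℕ, ∀ j < n, ((ℓ : ℤ) ^ k ∣ a j) := by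
        intro k
        induction k with
        | zero => simp
        | succ k ih =>
          choose! b hb using ih
          have hb0 : ∑ j ∈ Finset.range n, (b j : R) * π ^ j = 0 := by
            have : (ℓ : R) ^ k * ∑ j ∈ Finset.range n, (b j : R) * π ^ j = 0 := by
              rw [← hsum, Finset.mul_sum]
              refine Finset.sum_congr rfl fun j hj => ?_
              rw [hb j (Finset.mem_range.1 hj)]; push_cast; ring
            exact (mul_eq_zero.1 this).resolve_left (pow_ne_zero _ hℓR)
          have hd := hD b (by rw [hb0]; exact Ideal.zero_mem _)
          intro j hj
          rw [hb j hj, pow_succ]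
          exact mul_dvd_mul_left _ (hd j hj)
      have hz : ∀ j < n, a j = 0 := by
        intro j hj
        by_contra hne
        have h1 := Int.natAbs_dvd_natAbs.2 (hall (a j).natAbs j hj)
        have h2 := Nat.le_of_dvd (Int.natAbs_pos.2 hne) h1
        rw [Int.natAbs_pow, Int.natAbs_natCast] at h2
        exact absurd h2 (not_le.2 (Nat.lt_pow_self h.hℓ.one_lt))
      apply hi0
      refine Fin.lastCases h0 (fun i => ?_) i0
      have := hz i i.2
      simpa only [ha, dif_pos i.2, Fin.eta] using this
    rcases Int.natAbs_eq (g (Fin.last n)) with h1 | h1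
    · refine ⟨(g (Fin.last n)).natAbs, Int.natAbs_ne_zero.2 hlast, fun j => - a j, ?_⟩
      push_cast
      simp only [neg_mul, Finset.sum_neg_distrib]
      rw [hsum, neg_neg, h1]; simp
    · refine ⟨(g (Fin.last n)).natAbs, Int.natAbs_ne_zero.2 hlast, a, ?_⟩
      rw [hsum, h1]; simp
  classical
  obtain ⟨hm0, a, ha⟩ := Nat.find_spec hQ
  have hmin := fun m => Nat.find_min hQ (m := m)
  set m := Nat.find hQ
  refine ⟨m, ?_, ∑ j ∈ Finset.range n, C (a j) * X ^ j, by simpa [map_sum] using ha⟩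
  rintro ⟨m', hm'⟩
  have hd := hD a (by
    rw [ha, hm', one_mul]; push_cast; rw [mul_assoc]; exact Ideal.mul_mem_right _ _ hℓn)
  choose! b hb using hd
  have hm'0 : m' ≠ 0 := by rintro rfl; exact hm0 (by simpa using hm')
  refine hmin m' ?_ ⟨hm'0, b, ?_⟩
  · rw [hm']
    have := h.hℓ.two_le
    have : 0 < m' := Nat.pos_of_ne_zero hm'0
    nlinarith
  · apply mul_left_cancel₀ hℓR
    rw [Finset.mul_sum, ← mul_assoc, ← Nat.cast_mul, ← hm', ← ha]
    refine Finset.sum_congr rfl fun j hj => ?_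
    rw [hb j (Finset.mem_range.1 hj)]; push_cast; ring

end TotRam

end

/-! ### Nonexistence of such extensions for odd `ℓ` -/

section
open Polynomial

lemma smul_aeval {R G : Type*} [CommRing R] [Group G] [MulSemiringAction G R] (g : G) (f : ℤ[X])
    (x : R) : g • aeval x f = aeval (g • x) f := by
  have h := Polynomial.hom_eval₂ f (algebraMap ℤ R) (MulSemiringAction.toRingHom G R g) x
  rw [RingHom.ext_int ((MulSemiringAction.toRingHom G R g).comp (algebraMap ℤ R))
    (algebraMap ℤ R)] at h
  exact h

namespace TotRam
variable {R : Type*} [CommRing R] [IsDedekindDomain R] {G : Type*} [CommGroup G]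
  [MulSemiringAction G R] {P : Ideal R} {ℓ : ℕ} {π : R}

/-- As `π` generates `R` up to denominators, an element fixing `π` is trivial. -/
lemma smul_eq_self [CharZero R] (h : TotRam G P ℓ π) {g : G} (hg : g • π = π) : g = 1 := by
  refine h.faithful g fun x => ?_
  obtain ⟨m, hm, f, hf⟩ := h.exists_aeval x
  have hm0 : (m : R) ≠ 0 := by
    rw [Nat.cast_ne_zero]; rintro rfl; exact hm (dvd_zero _)
  apply mul_left_cancel₀ hm0
  have h1 : g • (aeval π f) = aeval π f := by
    rw [smul_aeval, hg]
  rw [hf, smul_mul', ← Int.cast_natCast, smul_int] at h1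
  exact_mod_cast h1

/-- If `g` fixes `δ` and `g π - π` has order exactly `2`, then the order of `δ` is divisible by `ℓ` (or
`δ = 0`), since `g` moves `π ^ s` by an element of order `s + 1` when `ℓ ∤ s`. Hence a lower bound for
the order of `δ` that is not divisible by `ℓ` can be improved. -/
lemma mem_pow_succ (h : TotRam G P ℓ π) {g : G} (hg : g • π - π ∉ P ^ 3) {δ : R}
    (hδ : g • δ = δ) {s : ℕ} (hs : ¬ ℓ ∣ s) (hmem : δ ∈ P ^ s) : δ ∈ P ^ (s + 1) := by
  obtain ⟨c, hc⟩ := exists_int_approx h.prime h.ne_bot h.res h.ordπ hmem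
  have hw : ord P (g • π - π) = (2 : ℕ) := ord_eq_iff.2 ⟨h.smul_sub_mem_sq g, hg⟩
  have h1 : (c : R) * (g • π ^ s - π ^ s) ∈ P ^ (s + 2) := by
    have h2 := h.smul_sub_mem g hc
    rw [smul_sub, smul_mul', smul_int, hδ] at h2
    rw [← neg_mem_iff]
    convert h2 using 1
    ring
  have hs0 : s ≠ 0 := by rintro rfl; exact hs (dvd_zero _)
  obtain ⟨t, rfl⟩ := Nat.exists_eq_succ_of_ne_zero hs0
  -- the difference quotient of `X ^ s` is congruent to `s π ^ (s - 1)`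
  have h3 : ord P (∑ i ∈ Finset.range (t + 1), (g • π) ^ i * π ^ (t + 1 - 1 - i)) = t := by
    have h4 : ord P (((t + 1 : ℕ) : ℤ) * π ^ t : R) = t := by
      rw [ord_mul h.prime h.ne_bot, ord_int h.prime h.hℓ h.ℓ_mem (by exact_mod_cast hs),
        ord_pow h.prime h.ne_bot, h.ordπ, zero_add, mul_one]
    have h5 : ∑ i ∈ Finset.range (t + 1), (g • π) ^ i * π ^ (t + 1 - 1 - i)
        - (((t + 1 : ℕ) : ℤ) * π ^ t : R) ∈ P ^ (t + 1) := by
      have h6 : (((t + 1 : ℕ) : ℤ) * π ^ t : R)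
          = ∑ i ∈ Finset.range (t + 1), π ^ i * π ^ (t + 1 - 1 - i) := by
        rw [Finset.sum_congr rfl (g := fun _ => π ^ t)]
        · simp
        · intro i hi
          rw [← pow_add]; congr 1; rw [Finset.mem_range] at hi; omega
      rw [h6, ← Finset.sum_sub_distrib]
      refine Ideal.sum_mem _ fun i hi => ?_
      rw [← sub_mul]
      rw [Finset.mem_range] at hi
      have h7 := Ideal.mul_mem_mul (h.smul_pow_sub_mem g i)
        (Ideal.pow_mem_pow h.π_mem (t + 1 - 1 - i))
      rw [← pow_add, smul_pow'] at h7
      exact Ideal.pow_le_pow_right (by omega) h7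
    obtain ⟨h8, h9⟩ := ord_eq_iff.1 h4
    refine ord_eq_iff.2 ⟨?_, fun h10 => h9 ?_⟩
    · have := Ideal.add_mem _ (Ideal.pow_le_pow_right (Nat.le_succ t) h5) h8
      simpa using this
    · have := Ideal.sub_mem _ h10 h5
      simpa using this
  have h4 : g • π ^ (t + 1) - π ^ (t + 1)
      = (∑ i ∈ Finset.range (t + 1), (g • π) ^ i * π ^ (t + 1 - 1 - i)) * (g • π - π) := by
    rw [smul_pow', (Commute.all _ _).geom_sum₂_mul]
  have hdvd : (ℓ : ℤ) ∣ c := by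
    by_contra hn
    rw [← le_ord_iff, ord_mul h.prime h.ne_bot, ord_int h.prime h.hℓ h.ℓ_mem hn, h4,
      ord_mul h.prime h.ne_bot, h3, hw] at h1
    have : t + 1 + 2 ≤ 0 + (t + 2) := by exact_mod_cast h1
    omega
  have : δ = (δ - c * π ^ (t + 1)) + c * π ^ (t + 1) := by ring
  rw [this]
  refine Ideal.add_mem _ hc ?_
  rw [pow_succ' P]
  exact Ideal.mul_mem_mul ((int_mem_iff h.prime h.hℓ h.ℓ_mem _).2 hdvd) (Ideal.pow_mem_pow h.π_mem _)

/-- Let `y` be the norm of `π` to the fixed ring of `H`, times an integer prime to `ℓ` that makes it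
a polynomial in `π`. An element `τ` of the second ramification group moves `y` by an element of
`P ^ (3 * ℓ)`: the difference is divisible by `∏ (π - τ g π)` over `g ∈ H`. This suffices if `H` lies in
the second ramification group; otherwise the product gives the bound `2 * ℓ + 1`, which
`mem_pow_succ` raises to the next multiple of `ℓ`, because `H` fixes the difference. -/
lemma exists_y [CharZero R] (h : TotRam G P ℓ π) {τ : G} (hτ : τ • π - π ∈ P ^ 3)
    (H : Subgroup G) (hH : Nat.card H = ℓ) :
    ∃ y : R, ord P y = (ℓ : ℕ) ∧ (∀ g ∈ H, g • y = y) ∧ y - τ • y ∈ P ^ (3 * ℓ) := by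
  classical
  have hfin : Finite G := Nat.finite_of_card_ne_zero (by
    rw [h.card]; exact pow_ne_zero _ h.hℓ.ne_zero)
  have : Fintype H := Fintype.ofFinite H
  have hcard : Fintype.card H = ℓ := by rw [← Nat.card_eq_fintype_card, hH]
  set z : R := ∏ g : H, (g : G) • π with hz
  have hzinv : ∀ g ∈ H, g • z = z := by
    intro g hg
    rw [hz, Finset.smul_prod']
    simp only [← mul_smul]
    exact Fintype.prod_equiv (Equiv.mulLeft (⟨g, hg⟩ : H)) _ _ fun x => rfl
  have hzord : ord P z = (ℓ : ℕ) := by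
    rw [hz, ord_prod h.prime h.ne_bot]
    simp [h.ord_smul, h.ordπ, hcard]
  obtain ⟨m, hm, f, hf⟩ := h.exists_aeval z
  set y : R := (m : R) * z with hy
  have hyinv : ∀ g ∈ H, g • y = y := by
    intro g hg
    rw [hy, smul_mul', hzinv g hg, ← Int.cast_natCast, smul_int]
  refine ⟨y, ?_, hyinv, ?_⟩
  · rw [hy, ord_mul h.prime h.ne_bot, hzord, ← Int.cast_natCast,
      ord_int h.prime h.hℓ h.ℓ_mem (by exact_mod_cast hm), zero_add]
  -- `f - y` is divisible by `∏ (X - g π)`, `g` running through `H`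
  have hdvd : (∏ g : H, (X - C ((g : G) • π))) ∣ f.map (Int.castRingHom R) - C y := by
    have h1 : (∏ g : H, (X - C ((g : G) • π)))
        = ((Finset.univ.val.map fun g : H => (g : G) • π).map fun a => X - C a).prod := by
      rw [Multiset.map_map]; rfl
    have hinj : Function.Injective fun g : H => (g : G) • π := by
      intro g g' hgg
      have h2 : ((g' : G)⁻¹ * g) • π = π := by
        rw [mul_smul, inv_smul_eq_iff]; exact hgg
      have := h.smul_eq_self h2
      exact Subtype.ext (inv_mul_eq_one.1 this).symm
    by_cases hp : f.map (Int.castRingHom R) - C y = 0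
    · rw [hp]; exact dvd_zero _
    rw [h1, Multiset.prod_X_sub_C_dvd_iff_le_roots hp,
      Multiset.le_iff_subset (Finset.univ.nodup.map hinj)]
    intro a ha
    obtain ⟨g, -, rfl⟩ := Multiset.mem_map.1 ha
    rw [mem_roots hp, IsRoot, eval_sub, eval_C, eval_map, ← algebraMap_int_eq, ← aeval_def, ← smul_aeval,
      hf, hyinv g g.2, sub_self]
  obtain ⟨q, hq⟩ := hdvd
  -- apply `τ` to the coefficients and evaluate at `π`
  have hδ : y - τ • y = (∏ g : H, (π - τ • (g : G) • π)) *
      (q.map (MulSemiringAction.toRingHom G R τ)).eval π := by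
    have h1 := congrArg (fun p => (p.map (MulSemiringAction.toRingHom G R τ)).eval π) hq
    simp only [Polynomial.map_sub, Polynomial.map_mul, Polynomial.map_prod, Polynomial.map_map,
      Polynomial.map_X, Polynomial.map_C, eval_sub, eval_mul, eval_prod, eval_X, eval_C,
      MulSemiringAction.toRingHom_apply] at h1
    rw [← h1, eval_map]
    congr 1
    rw [← hf, aeval_def]
    congr 1
    exact RingHom.ext_int _ _
  have hmove : ∀ g : H, π - τ • (g : G) • π = - (τ • ((g : G) • π - π) + (τ • π - π)) := by
    intro g; rw [smul_sub]; ring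
  by_cases hall : ∀ g : H, (g : G) • π - π ∈ P ^ 3
  · rw [hδ]
    refine Ideal.mul_mem_right _ _ ?_
    have : ∏ g : H, (π - τ • (g : G) • π) ∈ ∏ _g : H, P ^ 3 := by
      refine Ideal.prod_mem_prod fun g _ => ?_
      rw [hmove, neg_mem_iff]
      exact Ideal.add_mem _ (h.smul_mem_pow τ (hall g)) hτ
    simpa [hcard, ← pow_mul] using this
  · push Not at hall
    obtain ⟨g, hg⟩ := hall
    have hbase : y - τ • y ∈ P ^ (2 * ℓ + 1) := by
      rw [hδ]
      refine Ideal.mul_mem_right _ _ ?_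
      rw [← Finset.mul_prod_erase Finset.univ _ (Finset.mem_univ (1 : H))]
      have h1 : π - τ • ((1 : H) : G) • π ∈ P ^ 3 := by
        rw [hmove, neg_mem_iff]; simpa using hτ
      have h2 : ∏ g ∈ Finset.univ.erase (1 : H), (π - τ • (g : G) • π)
          ∈ ∏ _g ∈ Finset.univ.erase (1 : H), P ^ 2 := by
        refine Ideal.prod_mem_prod fun g _ => ?_
        rw [hmove, neg_mem_iff]
        exact Ideal.add_mem _ (h.smul_mem_pow τ (h.smul_sub_mem_sq _))
          (Ideal.pow_le_pow_right (by norm_num) hτ)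
      have h3 := Ideal.mul_mem_mul h1 h2
      rw [Finset.prod_const, Finset.card_erase_of_mem (Finset.mem_univ _), Finset.card_univ, hcard,
        ← pow_mul, ← pow_add] at h3
      have := h.hℓ.one_lt
      exact Ideal.pow_le_pow_right (by omega) h3
    have hinv : (g : G) • (y - τ • y) = y - τ • y := by
      rw [smul_sub, smul_comm, hyinv g g.2]
    have hstep : ∀ t : ℕ, 2 * ℓ + 1 + t ≤ 3 * ℓ → y - τ • y ∈ P ^ (2 * ℓ + 1 + t) := by
      intro t
      induction t with
      | zero => intro _; exact hbase
      | succ t ih =>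
        intro ht
        refine h.mem_pow_succ hg hinv ?_ (ih (by omega))
        rintro ⟨k, hk⟩
        change 2 * ℓ + 1 + t = ℓ * k at hk
        have h2 : 2 < k := by by_contra hh; push Not at hh; nlinarith
        have : ℓ * 3 ≤ ℓ * k := Nat.mul_le_mul_left _ h2
        omega
    have := hstep (ℓ - 1) (by have := h.hℓ.one_lt; omega)
    have h1 := h.hℓ.one_lt
    rwa [show 2 * ℓ + 1 + (ℓ - 1) = 3 * ℓ by omega] at this

/-- There is no elementary abelian extension of `ℚ` of degree `ℓ ^ 2` totally ramified at an odd
prime `ℓ`: with `y` as in `exists_y`, the monic integral polynomial `F` of degree `ℓ` whose roots are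
the `⟨τ⟩`-conjugates of `y` would satisfy `F'(y) ∈ P ^ (3 ℓ (ℓ - 1)) ⊆ P ^ (2 ℓ ^ 2)`, so that `ℓ ^ 2`
would divide the leading coefficient `ℓ` of `F'`. -/
theorem contradiction [CharZero R] (h : TotRam G P ℓ π) (hodd : 3 ≤ ℓ) : False := by
  classical
  have hfin : Finite G := Nat.finite_of_card_ne_zero (by
    rw [h.card]; exact pow_ne_zero _ h.hℓ.ne_zero)
  have hord : ∀ g : G, g ≠ 1 → Nat.card (Subgroup.zpowers g) = ℓ := fun g hg => by
    have := Fact.mk h.hℓ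
    rw [Nat.card_zpowers]; exact orderOf_eq_prime (h.exp g) hg
  obtain ⟨τ, hτ1, hτ⟩ := h.exists_ne_one
  obtain ⟨g₀, hg₀⟩ : ∃ g₀ : G, g₀ ∉ Subgroup.zpowers τ := by
    by_contra hh
    push Not at hh
    have h1 := hord τ hτ1
    rw [(Subgroup.eq_top_iff' _).2 hh, Subgroup.card_top, h.card] at h1
    nlinarith
  have hg₀1 : g₀ ≠ 1 := fun hh => hg₀ (hh ▸ one_mem _)
  -- `G` is generated by `τ` and `g₀`
  have hgen : ∀ S : Subgroup G, τ ∈ S → g₀ ∈ S → S = ⊤ := by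
    intro S hS1 hS2
    have hle : Subgroup.zpowers τ ≤ S := by rwa [Subgroup.zpowers_le]
    have h1 : Nat.card S ∣ ℓ ^ 2 := h.card ▸ Subgroup.card_subgroup_dvd_card S
    have h2 : ℓ < Nat.card S := by
      rw [← hord τ hτ1]
      by_contra hh
      have := Subgroup.eq_of_le_of_card_ge hle (not_lt.1 hh)
      exact hg₀ (this ▸ hS2)
    obtain ⟨k, hk, hk2⟩ := (Nat.dvd_prime_pow h.hℓ).1 h1
    refine Subgroup.eq_top_of_card_eq _ ?_
    rw [h.card, hk2]
    congr 1
    have : 1 < k := by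
      by_contra hh
      rw [hk2] at h2
      have := Nat.pow_le_pow_right h.hℓ.pos (not_lt.1 hh)
      rw [pow_one] at this
      omega
    omega
  obtain ⟨y, hyord, hyinv, hy⟩ := h.exists_y hτ (Subgroup.zpowers g₀) (hord g₀ hg₀1)
  have hg₀y : g₀ • y = y := hyinv g₀ (Subgroup.mem_zpowers g₀)
  have hdeep : ∀ g ∈ Subgroup.zpowers τ, y - g • y ∈ P ^ (3 * ℓ) := by
    intro g hg
    rw [← mem_powers_iff_mem_zpowers] at hg
    obtain ⟨k, rfl⟩ := hg
    induction k with
    | zero => simp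
    | succ k ih =>
      have h1 : y - τ ^ (k + 1) • y = (y - τ • y) + τ • (y - τ ^ k • y) := by
        rw [smul_sub, pow_succ', mul_smul]; ring
      simp only at ih ⊢
      rw [h1]
      exact Ideal.add_mem _ hy (h.smul_mem_pow τ ih)
  set T := Subgroup.zpowers τ with hT
  have : Fintype T := Fintype.ofFinite T
  have hcardT : Fintype.card T = ℓ := by rw [← Nat.card_eq_fintype_card, hord τ hτ1]
  set F : R[X] := ∏ t : T, (X - C ((t : G) • y)) with hF
  have hFmonic : F.Monic := monic_prod_of_monic _ _ fun t _ => monic_X_sub_C _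
  have hFdeg : F.natDegree = ℓ := by
    rw [hF, natDegree_prod_of_monic _ _ fun t _ => monic_X_sub_C _]
    simp [hcardT]
  have hFinv : ∀ g : G, F.map (MulSemiringAction.toRingHom G R g) = F := by
    have hmap : ∀ g : G, F.map (MulSemiringAction.toRingHom G R g)
        = ∏ t : T, (X - C (g • (t : G) • y)) := by
      intro g
      simp [hF, Polynomial.map_prod]
    let S : Subgroup G :=
      { carrier := {g | F.map (MulSemiringAction.toRingHom G R g) = F}
        one_mem' := by
          simp only [Set.mem_ofPred_eq, hmap, one_smul]; rfl
        mul_mem' := by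
          intro a b ha hb
          simp only [Set.mem_ofPred_eq] at *
          rw [show MulSemiringAction.toRingHom G R (a * b) =
            (MulSemiringAction.toRingHom G R a).comp (MulSemiringAction.toRingHom G R b) by
              ext x; simp [mul_smul], ← Polynomial.map_map, hb, ha]
        inv_mem' := by
          intro a ha
          simp only [Set.mem_ofPred_eq] at *
          nth_rw 1 [← ha]
          rw [Polynomial.map_map, show (MulSemiringAction.toRingHom G R a⁻¹).comp
            (MulSemiringAction.toRingHom G R a) = RingHom.id R by ext x; simp, Polynomial.map_id] }
    have hS : S = ⊤ := by
      apply hgen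
      · change F.map _ = F
        rw [hmap, hF]
        simp only [← mul_smul]
        exact Fintype.prod_equiv (Equiv.mulLeft (⟨τ, Subgroup.mem_zpowers τ⟩ : T)) _ _ fun x => rfl
      · change F.map _ = F
        rw [hmap, hF]
        refine Finset.prod_congr rfl fun t _ => ?_
        rw [smul_comm, hg₀y]
    intro g
    have : g ∈ S := hS ▸ Subgroup.mem_top g
    exact this
  have hcoeff : ∀ j, ∃ c : ℤ, (c : R) = F.coeff j := by
    intro j
    refine h.inv _ fun g => ?_
    have := congrArg (fun p => p.coeff j) (hFinv g)
    simpa using this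
  choose a ha using hcoeff
  have haℓ : a ℓ = 1 := by
    have h1 := ha ℓ
    rw [← hFdeg, hFmonic.coeff_natDegree] at h1
    rw [← hFdeg]; exact_mod_cast h1
  -- compute `F'(y)` in two ways
  have hder1 : F.derivative.eval y ∈ P ^ (2 * ℓ ^ 2) := by
    have h1 : F = (X - C y) * ∏ t ∈ Finset.univ.erase (1 : T), (X - C ((t : G) • y)) := by
      rw [hF, ← Finset.mul_prod_erase Finset.univ _ (Finset.mem_univ (1 : T))]
      simp
    rw [h1, derivative_mul]
    simp only [derivative_sub, derivative_X, derivative_C, eval_add, eval_mul, eval_sub, eval_X,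
      eval_C, sub_self, zero_mul, add_zero, sub_zero, one_mul, eval_prod]
    have h2 : ∏ t ∈ Finset.univ.erase (1 : T), (y - (t : G) • y)
        ∈ ∏ _t ∈ Finset.univ.erase (1 : T), P ^ (3 * ℓ) :=
      Ideal.prod_mem_prod fun t _ => hdeep t t.2
    rw [Finset.prod_const, Finset.card_erase_of_mem (Finset.mem_univ _), Finset.card_univ, hcardT,
      ← pow_mul] at h2
    refine Ideal.pow_le_pow_right ?_ h2
    obtain ⟨k, rfl⟩ := Nat.exists_eq_add_of_le hodd
    rw [show 3 + k - 1 = k + 2 by omega]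
    nlinarith
  have hder2 : F.derivative.eval y
      = ∑ j ∈ Finset.range ℓ, ((a (j + 1) * (j + 1) : ℤ) : R) * y ^ j := by
    rw [eval_eq_sum_range' (n := ℓ) (lt_of_lt_of_le (natDegree_derivative_lt
      (by rw [hFdeg]; exact h.hℓ.ne_zero)) hFdeg.le)]
    refine Finset.sum_congr rfl fun j _ => ?_
    rw [coeff_derivative, ← ha]
    push_cast; ring
  have hℓord : ord P (ℓ : R) = (ℓ * ℓ : ℕ) := by rw [h.ordℓ, pow_two]
  have hD := dvd_coeff h.prime h.ne_bot h.hℓ (e := ℓ) (N := ℓ) h.hℓ.pos h.hℓ.pos hyord hℓord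
  have hd1 := hD (fun j => a (j + 1) * (j + 1)) (by
    rw [← hder2]; exact Ideal.pow_le_pow_right (by nlinarith) hder1)
  choose! b hb using hd1
  have hd2 := hD b (by
    have h1 : (ℓ : R) * ∑ j ∈ Finset.range ℓ, (b j : R) * y ^ j ∈ P ^ (2 * ℓ ^ 2) := by
      convert hder1 using 1
      rw [hder2, Finset.mul_sum]
      refine Finset.sum_congr rfl fun j hj => ?_
      rw [hb j (Finset.mem_range.1 hj)]; push_cast; ring
    rw [← le_ord_iff, ord_mul h.prime h.ne_bot, h.ordℓ] at h1
    rw [← le_ord_iff]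
    rw [show (2 * ℓ ^ 2 : ℕ) = ℓ ^ 2 + ℓ * ℓ by ring, Nat.cast_add] at h1
    exact (ENat.add_le_add_iff_left (ENat.natCast_ne_top _)).1 h1)
  have hl : ℓ - 1 < ℓ := by have := h.hℓ.pos; omega
  have h1 := hb (ℓ - 1) hl
  obtain ⟨c, hc⟩ := hd2 (ℓ - 1) hl
  rw [hc, Nat.sub_add_cancel h.hℓ.one_lt.le, haℓ] at h1
  have hcast : ((ℓ - 1 : ℕ) : ℤ) = ℓ - 1 := by
    rw [Nat.cast_sub h.hℓ.one_lt.le]; simp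
  rw [hcast] at h1
  have h2 : (ℓ : ℤ) * (ℓ * c) = ℓ * 1 := by linarith
  have h3 : (ℓ : ℤ) * c = 1 := mul_left_cancel₀ (by exact_mod_cast h.hℓ.ne_zero) h2
  have h4 : (ℓ : ℤ) ∣ 1 := ⟨c, h3.symm⟩
  have h5 : ℓ ∣ 1 := by exact_mod_cast h4
  exact h.hℓ.one_lt.ne' (Nat.dvd_one.1 h5)

end TotRam

end

/-! ### Abelian `ℓ`-groups with one subgroup of index `ℓ` -/

section

/-- A finite abelian `ℓ`-group with at most one subgroup of index `ℓ` is cyclic: a proper subgroup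
lies in that subgroup, so any element outside it is a generator. -/
lemma exists_zpowers_eq_top {Q : Type*} [CommGroup Q] [Finite Q] {ℓ : ℕ} (hℓ : ℓ.Prime)
    (hQ : IsPGroup ℓ Q)
    (huniq : ∀ B₁ B₂ : Subgroup Q, B₁.index = ℓ → B₂.index = ℓ → B₁ = B₂) :
    ∃ g : Q, Subgroup.zpowers g = ⊤ := by
  have := Fact.mk hℓ
  obtain ⟨n, hn⟩ := IsPGroup.iff_card.1 hQ
  have key : ∀ H : Subgroup Q, H ≠ ⊤ → ∃ B : Subgroup Q, H ≤ B ∧ B.index = ℓ := by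
    intro H hH
    obtain ⟨m, hm, hmH⟩ := (Nat.dvd_prime_pow hℓ).1 (hn ▸ Subgroup.card_subgroup_dvd_card H)
    have hmn : m < n := lt_of_le_of_ne hm fun h => hH (Subgroup.eq_top_of_card_eq _ (by
      rw [hmH, hn, h]))
    obtain ⟨B, hB, hHB⟩ := Sylow.exists_subgroup_card_pow_prime_le (p := ℓ) (n := m) (m := n - 1)
      (by rw [hn]; exact pow_dvd_pow _ (by omega)) H hmH (by omega)
    refine ⟨B, hHB, ?_⟩
    have h1 := B.card_mul_index
    rw [hB, hn] at h1
    have h2 : ℓ ^ n = ℓ ^ (n - 1) * ℓ := by rw [← pow_succ]; congr 1; omega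
    rw [h2] at h1
    exact Nat.eq_of_mul_eq_mul_left (pow_pos hℓ.pos _) h1
  by_cases hbot : (⊥ : Subgroup Q) = ⊤
  · exact ⟨1, by rw [Subgroup.zpowers_one_eq_bot, hbot]⟩
  obtain ⟨B, -, hB⟩ := key ⊥ hbot
  obtain ⟨g, hg⟩ : ∃ g, g ∉ B := by
    by_contra hh
    push Not at hh
    rw [(Subgroup.eq_top_iff' B).2 hh, Subgroup.index_top] at hB
    exact hℓ.one_lt.ne hB
  refine ⟨g, ?_⟩
  by_contra hne
  obtain ⟨B', hle, hB'⟩ := key _ hne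
  rw [huniq B' B hB' hB] at hle
  exact hg (hle (Subgroup.mem_zpowers g))

/-- If `G / A` has exponent dividing `ℓ ^ k` and at most one subgroup of index `ℓ`, then it is cyclic, of
order at most `ℓ ^ k`. -/
lemma card_le_of_unique_index {G : Type*} [CommGroup G] [Finite G] {ℓ k : ℕ} (hℓ : ℓ.Prime)
    (A : Subgroup G) (hA : ∀ g : G, g ^ ℓ ^ k ∈ A)
    (huniq : ∀ B₁ B₂ : Subgroup G, A ≤ B₁ → A ≤ B₂ → B₁.index = ℓ → B₂.index = ℓ → B₁ = B₂) :
    Nat.card G ≤ Nat.card A * ℓ ^ k := by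
  have hpow : ∀ q : G ⧸ A, q ^ ℓ ^ k = 1 := by
    intro q
    induction q using QuotientGroup.induction_on with
    | H g => rw [← QuotientGroup.mk_pow, QuotientGroup.eq_one_iff]; exact hA g
  have hsurj : Function.Surjective (QuotientGroup.mk' A) := QuotientGroup.mk'_surjective A
  obtain ⟨q, hq⟩ := exists_zpowers_eq_top hℓ (Q := G ⧸ A) (fun q => ⟨k, hpow q⟩) (by
    intro B₁ B₂ h₁ h₂
    apply Subgroup.comap_injective hsurj
    apply huniq
    · intro x hx
      rw [Subgroup.mem_comap, QuotientGroup.mk'_apply, (QuotientGroup.eq_one_iff x).2 hx]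
      exact one_mem _
    · intro x hx
      rw [Subgroup.mem_comap, QuotientGroup.mk'_apply, (QuotientGroup.eq_one_iff x).2 hx]
      exact one_mem _
    · rw [Subgroup.index_comap_of_surjective _ hsurj, h₁]
    · rw [Subgroup.index_comap_of_surjective _ hsurj, h₂])
  rw [← A.card_mul_index]
  refine Nat.mul_le_mul_left _ ?_
  rw [Subgroup.index, ← Subgroup.card_top (G := G ⧸ A), ← hq, Nat.card_zpowers]
  exact orderOf_le_of_pow_eq_one (pow_pos hℓ.pos _) (hpow q)

end

/-! ### Cyclotomic fields inside `ℂ` -/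

section
open IntermediateField

/-- The field of `N`-th roots of unity inside `ℂ`. -/
noncomputable def cycField (N : ℕ) : IntermediateField ℚ ℂ := adjoin ℚ {z | z ^ N = 1}

/-- A field is cyclotomic here if it embeds into the field of `N`-th roots of unity of `ℂ` for some
`N > 0`. Ring homomorphisms are used, as they are automatically `ℚ`-linear. -/
def Cyc (K : Type*) [Field K] : Prop :=
  ∃ N : ℕ, 0 < N ∧ ∃ f : K →+* ℂ, ∀ x, f x ∈ cycField N

lemma cycField_mono {N M : ℕ} (h : N ∣ M) : cycField N ≤ cycField M := by
  obtain ⟨k, rfl⟩ := h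
  refine adjoin.mono _ _ _ fun z hz => ?_
  simp only [Set.mem_ofPred_eq] at hz ⊢
  rw [pow_mul, hz, one_pow]

lemma isCyclotomicExtension_cycField {N : ℕ} (hN : 0 < N) :
    IsCyclotomicExtension {N} ℚ (cycField N) := by
  have := NeZero.mk hN.ne'
  have hζ := Complex.isPrimitiveRoot_exp N hN.ne'
  have h : cycField N = ℚ⟮Complex.exp (2 * Real.pi * Complex.I / N)⟯ := by
    apply le_antisymm
    · refine adjoin_le_iff.2 fun z hz => ?_
      obtain ⟨i, -, rfl⟩ := hζ.eq_pow_of_pow_eq_one hz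
      exact pow_mem (mem_adjoin_simple_self _ _) i
    · rw [adjoin_simple_le_iff]
      exact subset_adjoin ℚ _ hζ.pow_eq_one
  rw [h]
  have h1 : IsIntegral ℚ (Complex.exp (2 * Real.pi * Complex.I / N)) :=
    (hζ.isIntegral hN).tower_top
  have h2 := adjoin_simple_toSubalgebra_of_isAlgebraic h1.isAlgebraic
  change IsCyclotomicExtension {N} ℚ
    ℚ⟮Complex.exp (2 * Real.pi * Complex.I / N)⟯.toSubalgebra
  rw [h2]
  exact hζ.adjoin_isCyclotomicExtension ℚ

lemma Cyc.exists_algHom {K : Type*} [Field K] [Algebra ℚ K] (h : Cyc K) :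
    ∃ N : ℕ+, Nonempty (K →ₐ[ℚ] CyclotomicField N ℚ) := by
  obtain ⟨N, hN, f, hf⟩ := h
  refine ⟨⟨N, hN⟩, ?_⟩
  have := isCyclotomicExtension_cycField hN
  have := NeZero.mk hN.ne'
  have : IsCyclotomicExtension {N} ℚ (CyclotomicField N ℚ) := by
    convert CyclotomicField.isCyclotomicExtension N ℚ
    · rfl
    · exact Subsingleton.elim _ _
  let e : cycField N ≃ₐ[ℚ] CyclotomicField N ℚ := IsCyclotomicExtension.algEquiv {N} ℚ _ _
  exact ⟨RingHom.toRatAlgHom ((e : cycField N →+* CyclotomicField N ℚ).comp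
    (f.codRestrict (cycField N) hf))⟩

lemma Cyc.of_ringHom {K L : Type*} [Field K] [Field L] (h : Cyc L) (g : K →+* L) : Cyc K := by
  obtain ⟨N, hN, f, hf⟩ := h
  exact ⟨N, hN, f.comp g, fun x => hf _⟩

/-- As the cyclotomic field is normal, all embeddings of a cyclotomic field land in it. -/
lemma Cyc.forall {K : Type*} [Field K] [NumberField K] (h : Cyc K) :
    ∃ N : ℕ, 0 < N ∧ ∀ f : K →+* ℂ, ∀ x, f x ∈ cycField N := by
  obtain ⟨N, hN, f, hf⟩ := h
  refine ⟨N, hN, fun g x => ?_⟩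
  have := isCyclotomicExtension_cycField hN
  have := NeZero.mk hN.ne'
  have : IsGalois ℚ (cycField N) := IsCyclotomicExtension.isGalois {N} ℚ _
  let y : cycField N := ⟨f x, hf x⟩
  let v : cycField N →ₐ[ℚ] ℂ := (cycField N).val
  have hsp := Normal.splits (F := ℚ) (K := cycField N) inferInstance y
  have hmin : minpoly ℚ y = minpoly ℚ x := by
    rw [← minpoly.algHom_eq v v.injective y,
      ← minpoly.algHom_eq f.toRatAlgHom f.injective x]
    rfl
  have hroot : Polynomial.aeval (g x) (minpoly ℚ y) = 0 := by
    have := Polynomial.aeval_algHom_apply g.toRatAlgHom x (minpoly ℚ y)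
    rw [hmin, minpoly.aeval, map_zero] at this
    rw [hmin]; exact this
  have hne : (minpoly ℚ y).map (algebraMap ℚ (cycField N)) ≠ 0 :=
    Polynomial.map_ne_zero (by rw [hmin]; exact minpoly.ne_zero (IsIntegral.of_finite ℚ x))
  have := hsp.mem_range_of_isRoot hne (i := v.toRingHom) (x := g x) (by
    rw [Polynomial.map_map, Polynomial.IsRoot, Polynomial.eval_map,
      RingHom.ext_rat (v.toRingHom.comp (algebraMap ℚ (cycField N))) (algebraMap ℚ ℂ)]
    exact hroot)
  obtain ⟨z, hz⟩ := this
  rw [← hz]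
  exact z.2

/-- A compositum of two cyclotomic fields is cyclotomic. -/
lemma Cyc.of_sup_eq_top {K : Type*} [Field K] [NumberField K]
    {E₁ E₂ : IntermediateField ℚ K} (h : E₁ ⊔ E₂ = ⊤) (h₁ : Cyc E₁) (h₂ : Cyc E₂) : Cyc K := by
  obtain ⟨N₁, hN₁, h₁⟩ := h₁.forall
  obtain ⟨N₂, hN₂, h₂⟩ := h₂.forall
  let f : K →ₐ[ℚ] ℂ := IsAlgClosed.lift
  refine ⟨N₁ * N₂, Nat.mul_pos hN₁ hN₂, f, fun x => ?_⟩
  have hle : E₁ ⊔ E₂ ≤ (cycField (N₁ * N₂)).comap f := by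
    refine sup_le (fun y hy => ?_) (fun y hy => ?_)
    · exact cycField_mono (dvd_mul_right _ _) (h₁ (f.toRingHom.comp E₁.val.toRingHom) ⟨y, hy⟩)
    · exact cycField_mono (dvd_mul_left _ _) (h₂ (f.toRingHom.comp E₂.val.toRingHom) ⟨y, hy⟩)
  rw [h] at hle
  exact hle (mem_top (x := x))

lemma Cyc.of_adjoin_eq_top {K : Type*} [Field K] [NumberField K]
    {n : ℕ} (hn : 0 < n) {ζ : K} (hζ : ζ ^ n = 1) (h : ℚ⟮ζ⟯ = ⊤) : Cyc K := by
  let f : K →ₐ[ℚ] ℂ := IsAlgClosed.lift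
  refine ⟨n, hn, f, fun x => ?_⟩
  have hle : ℚ⟮ζ⟯ ≤ (cycField n).comap f := by
    rw [adjoin_simple_le_iff]
    refine subset_adjoin ℚ _ ?_
    simp only [Set.mem_ofPred_eq]
    exact (map_pow f ζ n).symm.trans (by rw [hζ, map_one])
  rw [h] at hle
  exact hle (mem_top (x := x))

end

/-! ### Inertia groups and Minkowski's theorem -/

section
open NumberField

section ramification
variable {T M : Type*} [Field T] [Field M] [NumberField T] [NumberField M] [Algebra T M]

lemma card_inertia_eq (G : Type*) [Group G] [Finite G] [MulSemiringAction G M]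
    [IsGaloisGroup G T M] (P : Ideal (𝓞 M)) [P.IsMaximal] :
    Nat.card (P.inertia G) = P.ramificationIdx (𝓞 T) := by
  have : Module.Finite (𝓞 T) (𝓞 M) := Module.Finite.of_restrictScalars_finite ℤ _ _
  rw [Ideal.card_inertia_eq_ramificationIdxIn (P.under (𝓞 T)) P,
    Ideal.ramificationIdxIn_eq_ramificationIdx (P.under (𝓞 T)) P G]

lemma card_inertia_eq_int (G : Type*) [Group G] [Finite G] [MulSemiringAction G M]
    [IsGaloisGroup G ℚ M] (P : Ideal (𝓞 M)) [P.IsMaximal] :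
    Nat.card (P.inertia G) = P.ramificationIdx ℤ := by
  rw [Ideal.card_inertia_eq_ramificationIdxIn (P.under ℤ) P,
    Ideal.ramificationIdxIn_eq_ramificationIdx (P.under ℤ) P G]

/-- The fixed field of a group containing the inertia group of `P` is unramified below `P`. -/
lemma ramificationIdx_under_eq_one [IsGalois ℚ M] (J : Subgroup Gal(M/ℚ)) [IsGaloisGroup J T M]
    (P : Ideal (𝓞 M)) [P.IsMaximal] (hJ : P.inertia Gal(M/ℚ) ≤ J) :
    (P.under (𝓞 T)).ramificationIdx ℤ = 1 := by
  have h1 := card_inertia_eq_int Gal(M/ℚ) P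
  have h2 := card_inertia_eq (T := T) J P
  have h3 := Ideal.ramificationIdx_tower (R := ℤ) (P.under (𝓞 T)) P
  have h4 : Nat.card (P.inertia J) = Nat.card (P.inertia Gal(M/ℚ)) := by
    rw [Ideal.inertia, ← AddSubgroup.subgroupOf_inertia]
    exact Nat.card_congr (Subgroup.subgroupOfEquivOfLe hJ).toEquiv
  replace h2 : Nat.card (P.inertia Gal(M/ℚ)) = P.ramificationIdx (𝓞 T) := h4.symm.trans h2
  rw [h1] at h2
  rw [← h2] at h3
  have h5 : P.ramificationIdx ℤ ≠ 0 := by rw [← h1]; exact Nat.card_pos.ne'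
  exact Nat.eq_of_mul_eq_mul_right (Nat.pos_of_ne_zero h5) (by rw [one_mul]; exact h3.symm)

lemma exists_over (Q : Ideal (𝓞 T)) [Q.IsMaximal] :
    ∃ P : Ideal (𝓞 M), P.IsMaximal ∧ P.under (𝓞 T) = Q := by
  obtain ⟨P, hP, hPQ⟩ := Ideal.exists_maximal_ideal_liesOver_of_isIntegral (S := 𝓞 M) Q
  exact ⟨P, hP, hPQ.over.symm⟩

end ramification

/-- The inertia groups generate the Galois group over `ℚ`: the field fixed by all of them is
unramified, hence is `ℚ` by Minkowski's theorem. -/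
lemma eq_top_of_inertia_le {M : Type*} [Field M] [NumberField M] [IsGalois ℚ M]
    (J : Subgroup Gal(M/ℚ))
    (hJ : ∀ P : Ideal (𝓞 M), P.IsMaximal → P.inertia Gal(M/ℚ) ≤ J) : J = ⊤ := by
  let T : IntermediateField ℚ M := FixedPoints.intermediateField J
  have hT : Module.finrank ℚ T = 1 := by
    by_contra hne
    obtain ⟨Q, hQ, hun⟩ := NumberField.exists_not_isUnramifiedAt_int (K := T) (𝒪 := 𝓞 T) (by convert hne)
    apply hun
    obtain ⟨P, hP, rfl⟩ := exists_over (M := M) Q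
    have hG : IsGaloisGroup J T M := inferInstanceAs (IsGaloisGroup J
      (FixedPoints.intermediateField J : IntermediateField ℚ M) M)
    rw [← Ideal.ramificationIdx_eq_one_iff]
    exact ramificationIdx_under_eq_one J P (hJ P hP)
  have h1 : T = ⊥ := IntermediateField.finrank_eq_one_iff.1 (by convert hT)
  have h2 : IntermediateField.fixedField J = ⊥ := h1
  rw [← IsGalois.fixedField_top] at h2
  exact (IsGalois.intermediateFieldEquivSubgroup (F := ℚ) (E := M)).symm.injective h2

end

/-! ### Adjoining roots of unity -/

section
open NumberField IntermediateField

section general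
variable {F L M : Type*} [Field F] [Field L] [Field M] [Algebra F L] [Algebra L M] [Algebra F M]
  [IsScalarTower F L M] {n : ℕ} [NeZero n] {ζ : M}

/-- `L(ζ)` is the compositum of `L` and `F(ζ)`. -/
lemma sup_eq_top' [IsCyclotomicExtension {n} L M] (hζ : IsPrimitiveRoot ζ n) :
    (IsScalarTower.toAlgHom F L M).fieldRange ⊔ F⟮ζ⟯ = ⊤ := by
  rw [eq_top_iff]
  intro x _
  have hx := (IsCyclotomicExtension.iff_adjoin_eq_top {n} L M).1 inferInstance |>.2
  have hx2 : x ∈ Algebra.adjoin L {b : M | ∃ m ∈ ({n} : Set ℕ), m ≠ 0 ∧ b ^ m = 1} := by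
    rw [hx]; exact Algebra.mem_top
  refine Algebra.adjoin_induction (fun y hy => ?_) (fun r => ?_) (fun _ _ _ _ => add_mem)
    (fun _ _ _ _ => mul_mem) hx2
  · obtain ⟨m, rfl, -, hm⟩ := hy
    obtain ⟨i, -, rfl⟩ := hζ.eq_pow_of_pow_eq_one hm
    exact pow_mem ((le_sup_right : F⟮ζ⟯ ≤ _) (mem_adjoin_simple_self F ζ)) i
  · exact (le_sup_left : (IsScalarTower.toAlgHom F L M).fieldRange ≤ _) ⟨r, rfl⟩

variable (L) in
lemma normal_compositum [Normal F L] [CharZero F] [FiniteDimensional F M] [IsCyclotomicExtension {n} L M]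
    (hζ : IsPrimitiveRoot ζ n) : Normal F M := by
  have h1 : Normal F (IsScalarTower.toAlgHom F L M).fieldRange :=
    Normal.of_algEquiv (AlgEquiv.ofInjectiveField (IsScalarTower.toAlgHom F L M))
  have h2 : Normal F F⟮ζ⟯ := by
    have := hζ.intermediateField_adjoin_isCyclotomicExtension F
    have := IsCyclotomicExtension.isGalois {n} F F⟮ζ⟯
    infer_instance
  have h3 := IntermediateField.normal_sup F M (IsScalarTower.toAlgHom F L M).fieldRange F⟮ζ⟯
  rw [sup_eq_top' hζ] at h3
  exact Normal.of_algEquiv (IntermediateField.topEquiv (F := F) (E := M))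

lemma mem_fixingSubgroup_simple {σ : Gal(M/F)} : σ ∈ fixingSubgroup F⟮ζ⟯ ↔ σ ζ = ζ := by
  rw [IntermediateField.mem_fixingSubgroup_iff]
  constructor
  · intro h
    exact h ζ (mem_adjoin_simple_self F ζ)
  · intro h x hx
    have hle : F⟮ζ⟯ ≤ fixedField (Subgroup.zpowers σ) := by
      rw [adjoin_simple_le_iff, mem_fixedField_iff]
      intro g hg
      have : Subgroup.zpowers σ ≤ MulAction.stabilizer Gal(M/F) ζ := by
        rw [Subgroup.zpowers_le]; exact h
      exact this hg
    exact (mem_fixedField_iff _ x).1 (hle hx) σ (Subgroup.mem_zpowers σ)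

end general

section compositum
variable {L M : Type*} [Field L] [NumberField L] [Field M] [NumberField M] [Algebra L M]
  {n : ℕ} [NeZero n] {ζ : M}

lemma sup_eq_top [IsCyclotomicExtension {n} L M] (hζ : IsPrimitiveRoot ζ n) :
    (IsScalarTower.toAlgHom ℚ L M).fieldRange ⊔ ℚ⟮ζ⟯ = ⊤ :=
  sup_eq_top' hζ

lemma isGalois_compositum [IsGalois ℚ L] [IsCyclotomicExtension {n} L M]
    (hζ : IsPrimitiveRoot ζ n) : IsGalois ℚ M := by
  have : Normal ℚ M := normal_compositum L hζ
  exact ⟨⟩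

lemma eq_one_of_fix [IsCyclotomicExtension {n} L M] (hζ : IsPrimitiveRoot ζ n)
    {σ : Gal(M/ℚ)} (h1 : ∀ x : L, σ (algebraMap L M x) = algebraMap L M x) (h2 : σ ζ = ζ) :
    σ = 1 := by
  have hle : (IsScalarTower.toAlgHom ℚ L M).fieldRange ⊔ ℚ⟮ζ⟯
      ≤ fixedField (Subgroup.zpowers σ) := by
    have hz : ∀ x : M, σ x = x → x ∈ fixedField (Subgroup.zpowers σ) := by
      intro x hx
      rw [mem_fixedField_iff]
      intro g hg
      have : Subgroup.zpowers σ ≤ MulAction.stabilizer Gal(M/ℚ) x := by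
        rw [Subgroup.zpowers_le]; exact hx
      exact this hg
    refine sup_le ?_ ?_
    · rintro _ ⟨x, rfl⟩
      exact hz _ (h1 x)
    · rw [adjoin_simple_le_iff]
      exact hz _ h2
  rw [sup_eq_top hζ] at hle
  ext x
  exact (mem_fixedField_iff _ x).1 (hle (mem_top (x := x))) σ (Subgroup.mem_zpowers σ)

/-- Restriction to `L` and the action on `n`-th roots of unity. -/
noncomputable def resPow (L : Type*) [Field L] [NumberField L] [Algebra L M] [IsGalois ℚ L]
    (hζ : IsPrimitiveRoot ζ n) : Gal(M/ℚ) →* Gal(L/ℚ) × (ZMod n)ˣ :=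
  (AlgEquiv.restrictNormalHom L).prod (hζ.autToPow ℚ)

lemma autToPow_eq_one_iff (hζ : IsPrimitiveRoot ζ n) (σ : Gal(M/ℚ)) :
    hζ.autToPow ℚ σ = 1 ↔ σ ζ = ζ := by
  have h := hζ.autToPow_spec ℚ σ
  constructor
  · intro h1
    rw [h1] at h
    rw [← h]
    obtain rfl | hn := eq_or_ne n 1
    · rw [IsPrimitiveRoot.one_right_iff] at hζ; simp [hζ]
    · have : 1 < n := by have := NeZero.ne n; omega
      have := Fact.mk this
      rw [Units.val_one, ZMod.val_one, pow_one]
  · intro h1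
    rw [h1] at h
    have h2 : ζ ^ (hζ.autToPow ℚ σ : ZMod n).val = ζ ^ 1 := by rw [h, pow_one]
    rw [(IsOfFinOrder.pow_eq_pow_iff_modEq
      (isOfFinOrder_iff_pow_eq_one.2 ⟨n, NeZero.pos n, hζ.pow_eq_one⟩)), ← hζ.eq_orderOf] at h2
    have h3 := (ZMod.natCast_eq_natCast_iff _ _ n).2 h2
    rw [ZMod.natCast_zmod_val, Nat.cast_one] at h3
    exact Units.ext h3

/-- As `M = L(ζ)`, an automorphism is determined by its effect on `L` and on `ζ`. -/
lemma resPow_injective [IsGalois ℚ L] [IsCyclotomicExtension {n} L M]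
    (hζ : IsPrimitiveRoot ζ n) : Function.Injective (resPow L hζ) := by
  rw [injective_iff_map_eq_one]
  intro σ hσ
  rw [resPow, MonoidHom.prod_apply, Prod.mk_eq_one] at hσ
  refine eq_one_of_fix (L := L) hζ (fun x => ?_) ((autToPow_eq_one_iff hζ σ).1 hσ.2)
  rw [← AlgEquiv.restrictNormal_commutes σ L x]
  have : σ.restrictNormal L = 1 := hσ.1
  rw [this]; rfl

lemma card_dvd [IsGalois ℚ L] [IsCyclotomicExtension {n} L M] (hζ : IsPrimitiveRoot ζ n) :
    Nat.card Gal(M/ℚ) ∣ Nat.card Gal(L/ℚ) * n.totient := by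
  have h := Subgroup.card_dvd_of_injective _ (resPow_injective (L := L) hζ)
  rwa [Nat.card_prod, Nat.card_eq_fintype_card (α := (ZMod n)ˣ), ZMod.card_units_eq_totient] at h

lemma comm_compositum [IsGalois ℚ L] [IsCyclotomicExtension {n} L M] (hζ : IsPrimitiveRoot ζ n)
    (hL : ∀ σ τ : Gal(L/ℚ), σ * τ = τ * σ) (σ τ : Gal(M/ℚ)) : σ * τ = τ * σ := by
  apply resPow_injective (L := L) hζ
  rw [map_mul, map_mul]
  exact Prod.ext (hL _ _) (mul_comm _ _)

lemma finrank_adjoin_zeta (hζ : IsPrimitiveRoot ζ n) : Module.finrank ℚ ℚ⟮ζ⟯ = n.totient := by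
  have h1 := hζ.isIntegral (NeZero.pos n)
  rw [adjoin.finrank h1.tower_top, ← Polynomial.cyclotomic_eq_minpoly_rat hζ (NeZero.pos n),
    Polynomial.natDegree_cyclotomic]

/-- A field containing `ζ_n` of degree at most `φ(n)` equals `ℚ(ζ_n)`. -/
lemma cyc_of_card_le [IsGalois ℚ M] (hζ : IsPrimitiveRoot ζ n)
    (h : Nat.card Gal(M/ℚ) ≤ n.totient) : Cyc M := by
  refine Cyc.of_adjoin_eq_top (NeZero.pos n) hζ.pow_eq_one ?_
  rw [IsGalois.card_aut_eq_finrank, ← finrank_adjoin_zeta hζ] at h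
  exact eq_of_le_of_finrank_le le_top (by rwa [finrank_top'])

lemma mem_fixingSubgroup_zeta {σ : Gal(M/ℚ)} : σ ∈ fixingSubgroup ℚ⟮ζ⟯ ↔ σ ζ = ζ :=
  mem_fixingSubgroup_simple

lemma card_fixingSubgroup_zeta [IsGalois ℚ M] (hζ : IsPrimitiveRoot ζ n) :
    n.totient * Nat.card (fixingSubgroup ℚ⟮ζ⟯) = Nat.card Gal(M/ℚ) := by
  rw [IsGalois.card_fixingSubgroup_eq_finrank, IsGalois.card_aut_eq_finrank,
    ← finrank_adjoin_zeta hζ, Module.finrank_mul_finrank]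

/-- Away from the primes dividing `n`, inertia fixes the `n`-th roots of unity, as these are distinct
modulo `P`. -/
lemma inertia_fix_zeta (hζ : IsPrimitiveRoot ζ n) {P : Ideal (𝓞 M)} (hP : P.IsMaximal)
    (hn : (n : 𝓞 M) ∉ P) {σ : Gal(M/ℚ)} (hσ : σ ∈ P.inertia Gal(M/ℚ)) : σ ζ = ζ := by
  have hσ' := AddSubgroup.mem_inertia.1 hσ
  set x : 𝓞 M := hζ.toInteger with hx
  have hxn : x ^ n = 1 := hζ.toInteger_isPrimitiveRoot.pow_eq_one
  have hσx : (σ • x) ^ n = 1 := by rw [← smul_pow', hxn, smul_one]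
  by_contra hne
  have hne' : σ • x - x ≠ 0 := by
    rw [sub_ne_zero]
    intro h
    apply hne
    have := congrArg (algebraMap (𝓞 M) M) h
    exact this
  have hsum : ∑ i ∈ Finset.range n, (σ • x) ^ i * x ^ (n - 1 - i) = 0 := by
    have := (Commute.all (σ • x) x).geom_sum₂_mul n
    rw [hxn, hσx, sub_self] at this
    exact (mul_eq_zero.1 this).resolve_right hne'
  have hmod : Ideal.Quotient.mk P (σ • x) = Ideal.Quotient.mk P x :=
    (Ideal.Quotient.eq).2 (hσ' x)
  have h2 := congrArg (Ideal.Quotient.mk P) hsum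
  rw [map_sum, map_zero] at h2
  simp only [map_mul, map_pow, hmod, ← pow_add] at h2
  rw [Finset.sum_congr rfl (g := fun _ => Ideal.Quotient.mk P (x ^ (n - 1))) (fun i hi => by
    rw [Finset.mem_range] at hi
    rw [map_pow]; congr 1; omega), Finset.sum_const, Finset.card_range, nsmul_eq_mul,
    ← map_natCast (Ideal.Quotient.mk P), ← map_mul, Ideal.Quotient.eq_zero_iff_mem] at h2
  rcases hP.isPrime.mem_or_mem h2 with h3 | h3
  · exact hn h3
  · have h4 : x ^ (n - 1) * x = 1 := by
      rw [← pow_succ, Nat.sub_add_cancel (NeZero.pos n), hxn]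
    exact hP.ne_top ((Ideal.eq_top_iff_one _).2 (h4 ▸ Ideal.mul_mem_right x P h3))

lemma restrict_mem_inertia [IsGalois ℚ L] {P : Ideal (𝓞 M)} {σ : Gal(M/ℚ)}
    (hσ : σ ∈ P.inertia Gal(M/ℚ)) :
    σ.restrictNormal L ∈ (P.under (𝓞 L)).inertia Gal(L/ℚ) := by
  rw [AddSubgroup.mem_inertia] at hσ ⊢
  intro x
  have h1 := hσ (algebraMap (𝓞 L) (𝓞 M) x)
  change algebraMap (𝓞 L) (𝓞 M) (_ - _) ∈ P
  have e : algebraMap (𝓞 L) (𝓞 M) (σ.restrictNormal L • x) = σ • algebraMap (𝓞 L) (𝓞 M) x :=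
    NumberField.RingOfIntegers.ext (AlgEquiv.restrictNormal_commutes σ L (x : L))
  rw [map_sub, e]
  exact h1

lemma inertia_eq_bot [IsGalois ℚ L] {Q : Ideal (𝓞 L)} (hQ : Q.IsMaximal)
    (h : Q.ramificationIdx ℤ = 1) : Q.inertia Gal(L/ℚ) = ⊥ := by
  rw [← card_inertia_eq_int Gal(L/ℚ) Q] at h
  exact Subgroup.card_eq_one.1 h

end compositum

end

/-! ### Tame inertia in abelian extensions -/

section
open NumberField

section tame
variable {R : Type*} [CommRing R] [IsDedekindDomain R] {G : Type*} [Group G]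
  [MulSemiringAction G R] {P : Ideal R} {q : ℕ}

lemma smul_mem_pow' {g : G} (hg : ∀ x ∈ P, g • x ∈ P) {x : R} {k : ℕ} (hx : x ∈ P ^ k) :
    g • x ∈ P ^ k := by
  have h1 : P.map (MulSemiringAction.toRingHom G R g) ≤ P :=
    Ideal.map_le_iff_le_comap.2 fun y hy => hg y hy
  have h2 := Ideal.mem_map_of_mem (MulSemiringAction.toRingHom G R g) hx
  rw [Ideal.map_pow] at h2
  exact Ideal.pow_right_mono h1 k h2

lemma smul_mem_of_inertia {g : G} (hg : ∀ x, g • x - x ∈ P) (x : R) (hx : x ∈ P) : g • x ∈ P := by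
  have := P.add_mem (hg x) hx
  rwa [sub_add_cancel] at this

/-- An element of inertia fixing a uniformizer modulo `P ^ 2` acts trivially on the graded ring of the
`P`-adic filtration. -/
lemma smul_sub_mem_succ (hP : P.IsPrime) (hP0 : P ≠ ⊥) {π : R} (hπ : π ∈ P) (hπ2 : π ∉ P ^ 2)
    {g : G} (hg : ∀ x, g • x - x ∈ P) (hgπ : g • π - π ∈ P ^ 2) {k : ℕ} {y : R}
    (hy : y ∈ P ^ k) : g • y - y ∈ P ^ (k + 1) := by
  induction k generalizing y with
  | zero => simpa using hg y
  | succ k ih =>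
    -- `P ^ (k+1)` is generated additively by products of elements of `P` and `P ^ k`
    rw [pow_succ'] at hy
    refine Submodule.mul_induction_on hy (fun a ha b hb => ?_) (fun a b ha hb => ?_)
    · have h1 : g • a - a ∈ P ^ 2 := by
        obtain ⟨d, e, he, rfl⟩ := Ideal.exists_mul_add_mem_pow_succ hP0 (i := 1) π a
          (by simpa using hπ) hπ2 (by simpa using ha)
        have e1 : g • (π * d + e) - (π * d + e)
            = (g • π - π) * (g • d) + π * (g • d - d) + (g • e - e) := by
          rw [smul_add, smul_mul']; ring
        rw [e1]
        refine add_mem (add_mem (Ideal.mul_mem_right _ _ hgπ) ?_) (sub_mem ?_ he)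
        · rw [pow_two]; exact Ideal.mul_mem_mul hπ (hg d)
        · exact smul_mem_pow' (smul_mem_of_inertia hg) he
      have e2 : g • (a * b) - a * b = (g • a - a) * (g • b) + a * (g • b - b) := by
        rw [smul_mul']; ring
      rw [e2]
      refine add_mem ?_ ?_
      · rw [show k + 1 + 1 = 2 + k by ring, pow_add]
        exact Ideal.mul_mem_mul h1 (smul_mem_pow' (smul_mem_of_inertia hg) hb)
      · rw [pow_succ']
        exact Ideal.mul_mem_mul ha (ih hb)
    · have e3 : g • (a + b) - (a + b) = (g • a - a) + (g • b - b) := by rw [smul_add]; ring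
      rw [e3]; exact add_mem ha hb

/-- Wild inertia has no nontrivial elements of order prime to the residue characteristic: if `g` acts
trivially modulo `P ^ k`, then `g ^ n x - x ≡ n (g x - x)` modulo `P ^ (k + 1)`, and so `g` acts
trivially modulo `P ^ (k + 1)`. -/
lemma eq_one_of_smul_uniformizer (hP : P.IsPrime) (hP0 : P ≠ ⊥)
    (hfaith : ∀ g : G, (∀ x : R, g • x = x) → g = 1) {π : R} (hπ : π ∈ P) (hπ2 : π ∉ P ^ 2)
    {g : G} (hg : ∀ x, g • x - x ∈ P) (hgπ : g • π - π ∈ P ^ 2) {n : ℕ} (hgn : g ^ n = 1)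
    (hn : (n : R) ∉ P) : g = 1 := by
  have key : ∀ k : ℕ, ∀ x : R, g • x - x ∈ P ^ k := by
    intro k
    induction k with
    | zero => intro x; simp
    | succ k ih =>
      intro x
      set y := g • x - x with hy
      have h1 : ∀ i : ℕ, g ^ i • x - x - i * y ∈ P ^ (k + 1) := by
        intro i
        induction i with
        | zero => simp
        | succ i ihi =>
          have h2 := smul_mem_pow' (smul_mem_of_inertia hg) ihi
          have h3 := smul_sub_mem_succ hP hP0 hπ hπ2 hg hgπ (ih x)
          have e : g ^ (i + 1) • x - x - ((i + 1 : ℕ) : R) * y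
              = g • (g ^ i • x - x - i * y) + i * (g • y - y) := by
            rw [smul_sub, smul_sub, smul_mul', ← mul_smul, ← pow_succ',
              show g • (i : R) = i from map_natCast (MulSemiringAction.toRingHom G R g) i,
              show g • x = y + x by rw [hy]; ring]
            push_cast; ring
          rw [e]
          exact add_mem h2 (Ideal.mul_mem_left _ _ h3)
      have h4 := h1 n
      rw [hgn, one_smul, sub_self, zero_sub, neg_mem_iff] at h4
      exact (Ideal.IsPrime.mul_mem_pow P h4).resolve_left hn
  refine hfaith g fun x => ?_
  have h5 : g • x - x ∈ ⨅ i, P ^ i := (Ideal.mem_iInf).2 fun i => key i x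
  rw [Ideal.iInf_pow_eq_bot_of_isDomain P hP.ne_top] at h5
  exact sub_eq_zero.1 h5

/-- In an abelian extension, tame inertia at a prime over `q` has order at most `q - 1`: it acts
faithfully on `P / P ^ 2` through characters with values in `R / P`, and these are fixed by Frobenius. -/
lemma card_inertia_le_of_tame [Finite G] (hP : P.IsPrime) (hP0 : P ≠ ⊥)
    (hcomm : ∀ σ τ : G, σ * τ = τ * σ)
    (hfaith : ∀ g : G, (∀ x : R, g • x = x) → g = 1) (hq : 2 ≤ q) {φ : G}
    (hφ : ∀ x, φ • x - x ^ q ∈ P) (hcard : (Nat.card (P.inertia G) : R) ∉ P) :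
    Nat.card (P.inertia G) ≤ q - 1 := by
  obtain ⟨π, hπ, hπ2⟩ : ∃ π ∈ P, π ∉ P ^ 2 := by
    have := Ideal.pow_right_strictAnti P hP0 hP.ne_top (show 1 < 2 by norm_num)
    obtain ⟨π, h1, h2⟩ := SetLike.exists_of_lt this
    exact ⟨π, by simpa using h1, h2⟩
  have hI : ∀ g : P.inertia G, ∀ x, (g : G) • x - x ∈ P := fun g =>
    AddSubgroup.mem_inertia.1 g.2
  have hrep : ∀ y ∈ P, ∃ u, y - u * π ∈ P ^ 2 := by
    intro y hy
    obtain ⟨d, e, he, rfl⟩ := Ideal.exists_mul_add_mem_pow_succ hP0 (i := 1) π y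
      (by simpa using hπ) hπ2 (by simpa using hy)
    exact ⟨d, by convert he using 1; ring⟩
  have hcancel : ∀ a, a * π ∈ P ^ 2 → a ∈ P := fun a ha =>
    (Ideal.IsPrime.mul_mem_pow P ha).resolve_right hπ2
  have hφP : ∀ x ∈ P, φ • x ∈ P := by
    intro x hx
    have := add_mem (hφ x) (Ideal.pow_mem_of_mem P hx q (by omega))
    rwa [sub_add_cancel] at this
  choose u hu using fun g : P.inertia G =>
    hrep ((g : G) • π) (smul_mem_of_inertia (hI g) π hπ)
  obtain ⟨c, hc⟩ := hrep (φ • π) (hφP π hπ)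
  have hunP : ∀ g : P.inertia G, u g ∉ P := by
    intro g hug
    have h1 : (g : G) • π ∈ P ^ 2 := by
      have := add_mem (hu g) (show u g * π ∈ P ^ 2 by rw [pow_two]; exact Ideal.mul_mem_mul hug hπ)
      rwa [sub_add_cancel] at this
    have h2 := smul_mem_pow' (smul_mem_of_inertia (hI g⁻¹)) h1
    rw [InvMemClass.coe_inv, inv_smul_smul] at h2
    exact hπ2 h2
  have hcP : c ∉ P := by
    intro hcP
    have h1 : φ • π ∈ P ^ 2 := by
      have := add_mem hc (show c * π ∈ P ^ 2 by rw [pow_two]; exact Ideal.mul_mem_mul hcP hπ)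
      rwa [sub_add_cancel] at this
    -- a power of `φ` is its inverse
    have h2 : ∀ i : ℕ, φ ^ i • φ • π ∈ P ^ 2 := by
      intro i
      induction i with
      | zero => simpa using h1
      | succ i ih => rw [pow_succ' φ, mul_smul]; exact smul_mem_pow' hφP ih
    have h3 := h2 (orderOf φ - 1)
    rw [← mul_smul, ← pow_succ, Nat.sub_add_cancel (orderOf_pos φ), pow_orderOf_eq_one,
      one_smul] at h3
    exact hπ2 h3
  have hfrob : ∀ g : P.inertia G, u g ^ q - u g ∈ P := by
    intro g
    have h1 : φ • (g : G) • π - (u g) ^ q * c * π ∈ P ^ 2 := by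
      have e : φ • (g : G) • π - (u g) ^ q * c * π = φ • ((g : G) • π - u g * π)
          + (φ • u g - u g ^ q) * (φ • π) + u g ^ q * (φ • π - c * π) := by
        rw [smul_sub, smul_mul']; ring
      rw [e]
      refine add_mem (add_mem (smul_mem_pow' hφP (hu g)) ?_) (Ideal.mul_mem_left _ _ hc)
      rw [pow_two]; exact Ideal.mul_mem_mul (hφ _) (hφP π hπ)
    have h2 : (g : G) • φ • π - c * u g * π ∈ P ^ 2 := by
      have hgP := smul_mem_of_inertia (hI g)
      have e : (g : G) • φ • π - c * u g * π = (g : G) • (φ • π - c * π)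
          + ((g : G) • c - c) * ((g : G) • π) + c * ((g : G) • π - u g * π) := by
        rw [smul_sub, smul_mul']; ring
      rw [e]
      refine add_mem (add_mem (smul_mem_pow' hgP hc) ?_) (Ideal.mul_mem_left _ _ (hu g))
      rw [pow_two]; exact Ideal.mul_mem_mul (hI g _) (hgP π hπ)
    rw [← mul_smul, hcomm, mul_smul] at h1
    have h3 := sub_mem h2 h1
    have e : (g : G) • φ • π - c * u g * π - ((g : G) • φ • π - u g ^ q * c * π)
        = (c * (u g ^ q - u g)) * π := by ring
    rw [e] at h3
    exact (hP.mem_or_mem (hcancel _ h3)).resolve_left hcP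
  -- the classes of the `u g` are distinct roots of `X ^ (q - 1) = 1`
  let f : P.inertia G → R ⧸ P := fun g => Ideal.Quotient.mk P (u g)
  have hf1 : ∀ g, f g ∈ Polynomial.nthRootsFinset (q - 1) (1 : R ⧸ P) := by
    intro g
    rw [Polynomial.mem_nthRootsFinset (by omega)]
    have h1 : u g * (u g ^ (q - 1) - 1) ∈ P := by
      convert hfrob g using 1
      obtain ⟨k, rfl⟩ : ∃ k, q = k + 1 := ⟨q - 1, by omega⟩
      simp only [Nat.add_sub_cancel]; ring
    have h2 := (hP.mem_or_mem h1).resolve_left (hunP g)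
    rw [← map_pow, ← map_one (Ideal.Quotient.mk P)]
    exact (Ideal.Quotient.eq).2 h2
  have hf2 : Function.Injective f := by
    intro g g' hgg
    have h1 : u g - u g' ∈ P := (Ideal.Quotient.eq).1 hgg
    have h2 : (g : G) • π - (g' : G) • π ∈ P ^ 2 := by
      have e : (g : G) • π - (g' : G) • π = ((g : G) • π - u g * π) + (u g - u g') * π
          - ((g' : G) • π - u g' * π) := by ring
      rw [e]
      refine sub_mem (add_mem (hu g) ?_) (hu g')
      rw [pow_two]; exact Ideal.mul_mem_mul h1 hπ
    have h3 := smul_mem_pow' (smul_mem_of_inertia (hI g'⁻¹)) h2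
    rw [smul_sub, InvMemClass.coe_inv, inv_smul_smul, ← mul_smul] at h3
    have h4 : g'⁻¹ * g = 1 := by
      apply Subtype.ext
      refine eq_one_of_smul_uniformizer hP hP0 hfaith hπ hπ2 (hI (g'⁻¹ * g)) h3
        (n := Nat.card (P.inertia G)) ?_ hcard
      rw [← Subgroup.coe_pow, pow_card_eq_one']; rfl
    exact (inv_mul_eq_one.1 h4).symm
  classical
  calc Nat.card (P.inertia G) ≤ (Polynomial.nthRootsFinset (q - 1) (1 : R ⧸ P)).card := by
        rw [← Nat.card_eq_finsetCard]
        exact Nat.card_le_card_of_injective (fun g => (⟨f g, hf1 g⟩ : {x // x ∈ _}))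
          fun a b hab => hf2 (congrArg Subtype.val hab)
    _ ≤ q - 1 := by
        rw [Polynomial.nthRootsFinset]
        exact (Multiset.toFinset_card_le _).trans (Polynomial.card_nthRoots _ _)

end tame

lemma under_int_eq {R : Type*} [CommRing R] {P : Ideal R} [P.IsPrime] {q : ℕ}
    (hq : q.Prime) (hqP : (q : R) ∈ P) : P.under ℤ = Ideal.span {(q : ℤ)} := by
  have hmax : (Ideal.span {(q : ℤ)}).IsMaximal :=
    PrincipalIdealRing.isMaximal_of_irreducible (Nat.prime_iff_prime_int.1 hq).irreducible
  refine (hmax.eq_of_le (Ideal.IsPrime.ne_top inferInstance) ?_).symm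
  rw [Ideal.span_singleton_le_iff_mem, Ideal.mem_comap]
  simpa using hqP

lemma natCast_notMem {R : Type*} [CommRing R] {P : Ideal R} (hP : P ≠ ⊤) {q n : ℕ}
    (hqP : (q : R) ∈ P) (hn : q.Coprime n) : (n : R) ∉ P := by
  intro h
  apply (Ideal.ne_top_iff_one _).1 hP
  obtain ⟨a, b, hab⟩ := Nat.isCoprime_iff_coprime.2 hn
  have h2 : ((a : R) * (q : R) + b * n) = 1 := by exact_mod_cast congrArg (Int.cast : ℤ → R) hab
  rw [← h2]
  exact P.add_mem (P.mul_mem_left _ hqP) (P.mul_mem_left _ h)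

lemma ne_bot_of_natCast_mem {R : Type*} [CommRing R] [CharZero R] {P : Ideal R} {q : ℕ}
    (hq : q ≠ 0) (hqP : (q : R) ∈ P) : P ≠ ⊥ := by
  rintro rfl
  exact hq (by simpa using hqP)

/-- Inertia at a prime above `q ∤ |Gal(M/ℚ)|` in an abelian field has order at most `q - 1`. -/
lemma card_inertia_le {M : Type*} [Field M] [NumberField M] [IsGalois ℚ M]
    (hcomm : ∀ σ τ : Gal(M/ℚ), σ * τ = τ * σ) {P : Ideal (𝓞 M)} (hP : P.IsMaximal) {q : ℕ}
    (hq : q.Prime) (hqP : (q : 𝓞 M) ∈ P) (hco : q.Coprime (Nat.card Gal(M/ℚ))) :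
    Nat.card (P.inertia Gal(M/ℚ)) ≤ q - 1 := by
  have hP0 : P ≠ ⊥ := ne_bot_of_natCast_mem hq.ne_zero hqP
  have : Finite (𝓞 M ⧸ P) := Ideal.finiteQuotientOfFreeOfNeBot P hP0
  obtain ⟨φ, hφ⟩ := IsArithFrobAt.exists_of_isInvariant ℤ Gal(M/ℚ) P
  have hφ' : ∀ x : 𝓞 M, φ • x - x ^ q ∈ P := by
    intro x
    have := hφ x
    rw [under_int_eq hq hqP] at this
    have hc : Nat.card (ℤ ⧸ Ideal.span {(q : ℤ)}) = q := by
      rw [Nat.card_congr (Int.quotientSpanNatEquivZMod q).toEquiv, Nat.card_zmod]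
    rw [hc] at this
    exact this
  refine card_inertia_le_of_tame hP.isPrime hP0 hcomm (fun g hg => ?_) hq.two_le hφ' ?_
  · have : IsGaloisGroup Gal(M/ℚ) ℤ (𝓞 M) := inferInstance
    have := this.faithful
    exact FaithfulSMul.eq_of_smul_eq_smul (α := 𝓞 M) fun x => by rw [hg x, one_smul]
  · exact natCast_notMem hP.ne_top hqP (hco.coprime_dvd_right (Subgroup.card_subgroup_dvd_card _))

end

/-! ### Removal of tame ramification -/

section
open NumberField IntermediateField

/-- `L` is unramified at every prime above the integer `q`. -/
def UnramAt (L : Type*) [Field L] [NumberField L] (q : ℕ) : Prop :=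
  ∀ P : Ideal (𝓞 L), P.IsMaximal → (q : 𝓞 L) ∈ P → P.ramificationIdx ℤ = 1

section subfields
variable {M : Type*} [Field M] [NumberField M]

lemma ne_bot_of_isMaximal {P : Ideal (𝓞 M)} (hP : P.IsMaximal) : P ≠ ⊥ :=
  Ring.ne_bot_of_isMaximal_of_not_isField hP (RingOfIntegers.not_isField M)

lemma exists_prime_mem {P : Ideal (𝓞 M)} (hP : P.IsMaximal) :
    ∃ q : ℕ, q.Prime ∧ (q : 𝓞 M) ∈ P := by
  have : Finite (𝓞 M ⧸ P) := Ideal.finiteQuotientOfFreeOfNeBot P (ne_bot_of_isMaximal hP)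
  obtain ⟨q, hq⟩ := CharP.exists (𝓞 M ⧸ P)
  refine ⟨q, (CharP.char_is_prime_or_zero (𝓞 M ⧸ P) q).resolve_right
    (CharP.char_ne_zero_of_finite (𝓞 M ⧸ P) q), ?_⟩
  rw [← Ideal.Quotient.eq_zero_iff_mem, map_natCast, CharP.cast_eq_zero]

lemma exists_maximal_mem {q : ℕ} (hq : q.Prime) :
    ∃ P : Ideal (𝓞 M), P.IsMaximal ∧ (q : 𝓞 M) ∈ P := by
  have hmax : (Ideal.span {(q : ℤ)}).IsMaximal :=
    PrincipalIdealRing.isMaximal_of_irreducible (Nat.prime_iff_prime_int.1 hq).irreducible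
  obtain ⟨P, hP, hPQ⟩ := Ideal.exists_maximal_ideal_liesOver_of_isIntegral (S := 𝓞 M)
    (Ideal.span {(q : ℤ)})
  refine ⟨P, hP, ?_⟩
  have h1 : (q : ℤ) ∈ P.under ℤ := by
    rw [← hPQ.over]; exact Ideal.mem_span_singleton_self _
  simpa using (Ideal.mem_comap.1 h1)

open scoped Pointwise in
/-- In an abelian extension the inertia group depends only on the prime number below. -/
lemma inertia_eq_of_mem [IsGalois ℚ M] (hcomm : ∀ σ τ : Gal(M/ℚ), σ * τ = τ * σ)
    {P P' : Ideal (𝓞 M)} (hP : P.IsMaximal) (hP' : P'.IsMaximal) {q : ℕ} (hq : q.Prime)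
    (h : (q : 𝓞 M) ∈ P) (h' : (q : 𝓞 M) ∈ P') :
    P'.inertia Gal(M/ℚ) = P.inertia Gal(M/ℚ) := by
  have key : ∀ P P' : Ideal (𝓞 M), P.IsMaximal → P'.IsMaximal → (q : 𝓞 M) ∈ P →
      (q : 𝓞 M) ∈ P' → P.inertia Gal(M/ℚ) ≤ P'.inertia Gal(M/ℚ) := by
    intro P P' hP hP' h h'
    have h1 : P.LiesOver (P.under ℤ) := ⟨rfl⟩
    have h2 : P'.LiesOver (P.under ℤ) := ⟨by rw [under_int_eq hq h, under_int_eq hq h']⟩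
    obtain ⟨σ, rfl⟩ := Ideal.exists_smul_eq_of_isGaloisGroup (P.under ℤ) P P' Gal(M/ℚ)
    intro τ hτ
    rw [AddSubgroup.mem_inertia] at hτ ⊢
    intro x
    have h3 := hτ (σ⁻¹ • x)
    change _ ∈ σ • P
    rw [Ideal.mem_pointwise_smul_iff_inv_smul_mem, smul_sub, ← mul_smul, hcomm, mul_smul]
    exact h3
  exact le_antisymm (key _ _ hP' hP h' h) (key _ _ hP hP' h h')

lemma normal_of_comm {G : Type*} [Group G] (hcomm : ∀ σ τ : G, σ * τ = τ * σ) (J : Subgroup G) :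
    J.Normal := ⟨fun n hn g => by rwa [hcomm g n, mul_inv_cancel_right]⟩

lemma isGalois_fixedField [IsGalois ℚ M] (hcomm : ∀ σ τ : Gal(M/ℚ), σ * τ = τ * σ)
    (J : Subgroup Gal(M/ℚ)) : IsGalois ℚ (fixedField J) := by
  have := normal_of_comm hcomm J
  convert IsGalois.of_fixedField_normal_subgroup J
  exact Subsingleton.elim _ _

instance isGaloisGroup_fixedField [IsGalois ℚ M] (J : Subgroup Gal(M/ℚ)) : IsGaloisGroup J (fixedField J) M :=
  inferInstanceAs (IsGaloisGroup J (FixedPoints.intermediateField J : IntermediateField ℚ M) M)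

variable {T : Type*} [Field T] [NumberField T] [Algebra T M]

lemma comm_of_algebra [IsGalois ℚ M] [IsGalois ℚ T] (hcomm : ∀ σ τ : Gal(M/ℚ), σ * τ = τ * σ)
    (σ τ : Gal(T/ℚ)) : σ * τ = τ * σ := by
  obtain ⟨σ, rfl⟩ := AlgEquiv.restrictNormalHom_surjective M σ
  obtain ⟨τ, rfl⟩ := AlgEquiv.restrictNormalHom_surjective M τ
  rw [← map_mul, hcomm, map_mul]

lemma card_mul_card [IsGalois ℚ M] [IsGalois ℚ T] (J : Subgroup Gal(M/ℚ)) [IsGaloisGroup J T M] :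
    Nat.card Gal(T/ℚ) * Nat.card J = Nat.card Gal(M/ℚ) := by
  rw [IsGalois.card_aut_eq_finrank, IsGalois.card_aut_eq_finrank, IsGaloisGroup.card_eq_finrank J T M,
    Module.finrank_mul_finrank]

/-- The fixed field of a group containing all inertia groups above `q` is unramified at `q`. -/
lemma unramAt_of_inertia_le [IsGalois ℚ M] (J : Subgroup Gal(M/ℚ)) [IsGaloisGroup J T M] {q : ℕ}
    (h : ∀ P : Ideal (𝓞 M), P.IsMaximal → (q : 𝓞 M) ∈ P → P.inertia Gal(M/ℚ) ≤ J) :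
    UnramAt T q := by
  intro Q hQ hqQ
  obtain ⟨P, hP, rfl⟩ := exists_over (M := M) Q
  refine ramificationIdx_under_eq_one J P (h P hP ?_)
  have := Ideal.mem_comap.1 hqQ
  rwa [map_natCast] at this

end subfields

section compositum
variable {L M : Type*} [Field L] [NumberField L] [Field M] [NumberField M] [Algebra L M]
  {n : ℕ} [NeZero n] {ζ : M}

/-- The compositum of `L` with the `n`-th cyclotomic field is unramified wherever both are. -/
lemma inertia_compositum_eq_bot [IsGalois ℚ L] [IsGalois ℚ M] [IsCyclotomicExtension {n} L M]
    (hζ : IsPrimitiveRoot ζ n) {q : ℕ} (hL : UnramAt L q) (hq : q.Coprime n)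
    {P : Ideal (𝓞 M)} (hP : P.IsMaximal) (hqP : (q : 𝓞 M) ∈ P) : P.inertia Gal(M/ℚ) = ⊥ := by
  rw [eq_bot_iff]
  intro σ hσ
  have h1 := restrict_mem_inertia (L := L) hσ
  have hmax : (P.under (𝓞 L)).IsMaximal := Ideal.isMaximal_comap_of_isIntegral_of_isMaximal P
  rw [inertia_eq_bot hmax (hL _ hmax (by rw [Ideal.mem_comap, map_natCast]; exact hqP)),
    Subgroup.mem_bot] at h1
  refine eq_one_of_fix (L := L) hζ (fun x => ?_)
    (inertia_fix_zeta hζ hP (natCast_notMem hP.ne_top hqP hq) hσ)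
  rw [← AlgEquiv.restrictNormal_commutes σ L x, h1]; rfl

lemma card_fixingSubgroup_dvd [IsGalois ℚ L] [IsGalois ℚ M] [IsCyclotomicExtension {n} L M]
    (hζ : IsPrimitiveRoot ζ n) :
    Nat.card (fixingSubgroup ℚ⟮ζ⟯) ∣ Nat.card Gal(L/ℚ) := by
  refine Subgroup.card_dvd_of_injective
    ((AlgEquiv.restrictNormalHom L).comp (fixingSubgroup ℚ⟮ζ⟯).subtype) ?_
  rw [injective_iff_map_eq_one]
  intro σ hσ
  refine Subtype.ext (eq_one_of_fix (L := L) hζ (fun x => ?_) (mem_fixingSubgroup_zeta.1 σ.2))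
  rw [← AlgEquiv.restrictNormal_commutes _ L x]
  have : (σ : Gal(M/ℚ)).restrictNormal L = 1 := hσ
  rw [this]; rfl

lemma Cyc.adjoin_zeta (hζ : ζ ^ n = 1) : Cyc ℚ⟮ζ⟯ := by
  let f : M →ₐ[ℚ] ℂ := IsAlgClosed.lift
  refine ⟨n, NeZero.pos n, f.toRingHom.comp ℚ⟮ζ⟯.val.toRingHom, fun x => ?_⟩
  have hle : ℚ⟮ζ⟯ ≤ (cycField n).comap f := by
    rw [adjoin_simple_le_iff]
    refine subset_adjoin ℚ _ ?_
    simp only [Set.mem_ofPred_eq]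
    exact (map_pow f ζ n).symm.trans (by rw [hζ, map_one])
  exact hle x.2

end compositum

/-- Two subgroups generating `G` whose orders have product at most `|G|` intersect trivially. -/
lemma card_eq_and_inf_eq_bot {G : Type*} [Group G] [Finite G] (hcomm : ∀ σ τ : G, σ * τ = τ * σ)
    {J H : Subgroup G} {a : ℕ} (h : J ⊔ H = ⊤) (hJ : Nat.card J ≤ a)
    (hH : a * Nat.card H = Nat.card G) : Nat.card J = a ∧ J ⊓ H = ⊥ := by
  have := normal_of_comm hcomm H
  let f : J × H → G := fun x => x.1 * x.2
  have hf : Function.Surjective f := by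
    intro g
    have hg : g ∈ J ⊔ H := by rw [h]; trivial
    obtain ⟨y, hy, z, hz, rfl⟩ := Subgroup.mem_sup_of_normal_right.1 hg
    exact ⟨(⟨y, hy⟩, ⟨z, hz⟩), rfl⟩
  have h1 := Nat.card_le_card_of_surjective f hf
  rw [Nat.card_prod, ← hH] at h1
  have h2 : Nat.card J = a := le_antisymm hJ (Nat.le_of_mul_le_mul_right h1 Nat.card_pos)
  refine ⟨h2, ?_⟩
  have hbij : Function.Bijective f := (Nat.bijective_iff_surjective_and_card f).2
    ⟨hf, by rw [Nat.card_prod, h2, hH]⟩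
  rw [eq_bot_iff]
  intro g hg
  have := hbij.1 (a₁ := (⟨g, hg.1⟩, 1)) (a₂ := (1, ⟨g, hg.2⟩)) (by simp [f])
  have h3 := congrArg (fun x : J × H => (x.1 : G)) this
  simpa using h3

/-- Tamely ramified primes can be removed one at a time: for `q ≠ ℓ` with inertia group `J` in
`L(ζ_q)`, the fields `L(ζ_q)^J` and `ℚ(ζ_q)` generate `L(ζ_q)`, and the first is unramified at `q`.
Indeed `J` and `Gal(L(ζ_q)/ℚ(ζ_q))` together contain all inertia groups, so they generate the Galois
group, and `|J| ≤ q - 1` forces their intersection to be trivial. -/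
theorem cyc_of_unramified_outside {ℓ m : ℕ} (hℓ : ℓ.Prime)
    (hbase : ∀ (T : Type u) [Field T] [NumberField T] [IsGalois ℚ T],
      (∀ σ τ : Gal(T/ℚ), σ * τ = τ * σ) → Nat.card Gal(T/ℚ) ∣ ℓ ^ m →
      (∀ q : ℕ, q.Prime → q ≠ ℓ → UnramAt T q) → Cyc T) (S : Finset ℕ) :
    (∀ q ∈ S, q.Prime ∧ q ≠ ℓ) →
    ∀ (L : Type u) [Field L] [NumberField L] [IsGalois ℚ L],
      (∀ σ τ : Gal(L/ℚ), σ * τ = τ * σ) → Nat.card Gal(L/ℚ) ∣ ℓ ^ m →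
      (∀ q : ℕ, q.Prime → q ∉ S → q ≠ ℓ → UnramAt L q) → Cyc L := by
  induction S using Finset.induction_on with
  | empty =>
    intro _ L _ _ _ hcomm hcard hun
    exact hbase L hcomm hcard fun q hq hne => hun q hq (Finset.notMem_empty q) hne
  | insert q S hqS ih =>
    intro hS L _ _ _ hcommL hcard hun
    obtain ⟨hq, hqℓ⟩ := hS q (Finset.mem_insert_self q S)
    have : NeZero q := ⟨hq.ne_zero⟩
    let M := CyclotomicField q L
    let ζ : M := IsCyclotomicExtension.zeta q L M
    have hζ : IsPrimitiveRoot ζ q := IsCyclotomicExtension.zeta_spec q L M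
    have : IsGalois ℚ M := isGalois_compositum (L := L) hζ
    have hcomm : ∀ σ τ : Gal(M/ℚ), σ * τ = τ * σ := comm_compositum (L := L) hζ hcommL
    have htot : q.totient = q - 1 := Nat.totient_prime hq
    have hco : q.Coprime (Nat.card Gal(M/ℚ)) := by
      refine Nat.Coprime.coprime_dvd_right (card_dvd (L := L) hζ) (Nat.Coprime.mul_right ?_ ?_)
      · exact Nat.Coprime.coprime_dvd_right hcard
          (((Nat.coprime_primes hq hℓ).2 hqℓ).pow_right m)
      · rw [htot, hq.coprime_iff_not_dvd]
        intro h
        have := Nat.le_of_dvd (by have := hq.two_le; omega) h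
        have := hq.two_le
        omega
    obtain ⟨P, hP, hqP⟩ := exists_maximal_mem (M := M) hq
    let J := P.inertia Gal(M/ℚ)
    let H := fixingSubgroup ℚ⟮ζ⟯
    have hJcard : Nat.card J ≤ q - 1 := card_inertia_le hcomm hP hq hqP hco
    have hsup : J ⊔ H = ⊤ := by
      refine eq_top_of_inertia_le _ fun P' hP' => ?_
      by_cases hqP' : (q : 𝓞 M) ∈ P'
      · rw [inertia_eq_of_mem hcomm hP hP' hq hqP hqP']
        exact le_sup_left
      · refine le_trans (fun σ hσ => ?_) le_sup_right
        exact mem_fixingSubgroup_zeta.2 (inertia_fix_zeta hζ hP' hqP' hσ)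
    have hHcard : (q - 1) * Nat.card H = Nat.card Gal(M/ℚ) := by
      rw [← htot]; exact card_fixingSubgroup_zeta hζ
    obtain ⟨hJ, hinf⟩ := card_eq_and_inf_eq_bot hcomm hsup hJcard hHcard
    let T := fixedField J
    have hT : IsGalois ℚ T := isGalois_fixedField hcomm J
    have hTcard : Nat.card Gal(T/ℚ) = Nat.card H := by
      have h1 := card_mul_card (T := T) J
      rw [← hHcard, hJ, mul_comm] at h1
      exact Nat.eq_of_mul_eq_mul_left (by have := hq.two_le; omega) h1
    have hCT : Cyc T := by
      refine ih (fun r hr => hS r (Finset.mem_insert_of_mem hr)) T (comm_of_algebra hcomm) ?_ ?_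
      · rw [hTcard]
        exact (card_fixingSubgroup_dvd (L := L) hζ).trans hcard
      · intro r hr hrS hrℓ
        refine unramAt_of_inertia_le J fun P' hP' hrP' => ?_
        by_cases hrq : r = q
        · subst hrq
          exact (inertia_eq_of_mem hcomm hP hP' hr hqP hrP').le
        · rw [inertia_compositum_eq_bot (L := L) hζ
            (hun r hr (by simp [hrq, hrS]) hrℓ) ((Nat.coprime_primes hr hq).2 hrq) hP' hrP']
          exact bot_le
    have htop : T ⊔ ℚ⟮ζ⟯ = ⊤ := by
      have h1 : (T ⊔ ℚ⟮ζ⟯).fixingSubgroup = ⊥ := by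
        rw [IntermediateField.fixingSubgroup_sup, IntermediateField.fixingSubgroup_fixedField]
        exact hinf
      rw [← IsGalois.fixedField_fixingSubgroup (T ⊔ ℚ⟮ζ⟯), h1, IntermediateField.fixedField_bot]
    exact (Cyc.of_sup_eq_top htop hCT (Cyc.adjoin_zeta (n := q) hζ.pow_eq_one)).of_ringHom
      (algebraMap L M)

end

/-! ### Uniqueness of the subextension of degree `ℓ` -/

section
open NumberField IntermediateField

section odd

lemma ord_natCast {E : Type*} [Field E] [NumberField E] {P : Ideal (𝓞 E)} (hP : P.IsMaximal)
    {ℓ : ℕ} (hℓ : ℓ.Prime) (hℓP : (ℓ : 𝓞 E) ∈ P) :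
    ord P (ℓ : 𝓞 E) = (P.ramificationIdx ℤ : ℕ) := by
  have hmap : (P.under ℤ).map (algebraMap ℤ (𝓞 E)) = Ideal.span {(ℓ : 𝓞 E)} := by
    rw [under_int_eq hℓ hℓP, Ideal.map_span, Set.image_singleton, eq_intCast, Int.cast_natCast]
  have hne : Ideal.span {(ℓ : 𝓞 E)} ≠ ⊥ := by
    rw [Ne, Ideal.span_singleton_eq_bot]
    exact_mod_cast hℓ.ne_zero
  have : P.LiesOver (P.under ℤ) := ⟨rfl⟩
  rw [ord, Ideal.IsDedekindDomain.ramificationIdx_eq_multiplicity (P.under ℤ) P (by rwa [hmap]), hmap]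
  refine (FiniteMultiplicity.emultiplicity_eq_multiplicity ?_)
  exact FiniteMultiplicity.of_prime_left (Ideal.prime_of_isPrime (ne_bot_of_isMaximal hP) hP.isPrime)
    hne

/-- There is no totally ramified elementary abelian extension of `ℚ` of degree `ℓ ^ 2`, for `ℓ`
odd. -/
lemma no_elementary {E : Type*} [Field E] [NumberField E] [IsGalois ℚ E]
    (hcomm : ∀ σ τ : Gal(E/ℚ), σ * τ = τ * σ) {ℓ : ℕ} (hℓ : ℓ.Prime) (hodd : 3 ≤ ℓ)
    (hcard : Nat.card Gal(E/ℚ) = ℓ ^ 2) (hexp : ∀ σ : Gal(E/ℚ), σ ^ ℓ = 1)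
    {P : Ideal (𝓞 E)} (hP : P.IsMaximal) (hℓP : (ℓ : 𝓞 E) ∈ P)
    (hin : P.inertia Gal(E/ℚ) = ⊤) : False := by
  let : CommGroup Gal(E/ℚ) := { (inferInstance : Group Gal(E/ℚ)) with mul_comm := hcomm }
  have hP0 := ne_bot_of_isMaximal hP
  obtain ⟨π, hπ, hπ2⟩ : ∃ π ∈ P, π ∉ P ^ 2 := by
    have := Ideal.pow_right_strictAnti P hP0 hP.ne_top (show 1 < 2 by norm_num)
    obtain ⟨π, h1, h2⟩ := SetLike.exists_of_lt this
    exact ⟨π, by simpa using h1, h2⟩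
  have hramif : P.ramificationIdx ℤ = ℓ ^ 2 := by
    rw [← card_inertia_eq_int Gal(E/ℚ) P, hin, ← hcard]
    exact Nat.card_congr Subgroup.topEquiv.toEquiv
  have hGal : IsGaloisGroup Gal(E/ℚ) ℤ (𝓞 E) := inferInstance
  have hres : ∀ x : 𝓞 E, ∃ c : ℤ, x - c ∈ P := by
    have : P.LiesOver (P.under ℤ) := ⟨rfl⟩
    have h1 := Ideal.ncard_primesOver_mul_card_inertia_mul_finrank (G := Gal(E/ℚ)) (P.under ℤ) P
    rw [card_inertia_eq_int Gal(E/ℚ) P, hramif, hcard] at h1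
    have h2 : P.inertiaDeg ℤ = 1 := by
      have h3 : 0 < ℓ ^ 2 := pow_pos hℓ.pos 2
      have h4 : ((P.under ℤ).primesOver (𝓞 E)).ncard * P.inertiaDeg ℤ = 1 := by
        apply Nat.eq_of_mul_eq_mul_right h3
        rw [one_mul, mul_right_comm]; exact h1
      exact Nat.eq_one_of_mul_eq_one_left h4
    have hm : (P.under ℤ).IsMaximal := Ideal.isMaximal_comap_of_isIntegral_of_isMaximal P
    rw [Ideal.inertiaDeg_eq_of_isMaximal (P.under ℤ)] at h2
    let := Ideal.Quotient.field (P.under ℤ)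
    have hb := (Module.Free.bijective_algebraMap_of_finrank_eq_one h2).2
    intro x
    obtain ⟨c, hc⟩ := hb (Ideal.Quotient.mk P x)
    obtain ⟨c, rfl⟩ := Ideal.Quotient.mk_surjective c
    refine ⟨c, (Ideal.Quotient.eq).1 ?_⟩
    rw [← hc]
    simp
  have h : TotRam Gal(E/ℚ) P ℓ π :=
    { prime := hP.isPrime
      ne_bot := hP0
      hℓ := hℓ
      exp := hexp
      card := hcard
      faithful := fun g hg => by
        have := hGal.faithful
        exact FaithfulSMul.eq_of_smul_eq_smul (α := 𝓞 E) fun x => (hg x).trans (one_smul _ x).symm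
      inv := fun x hx => by
        obtain ⟨c, hc⟩ := hGal.isInvariant.isInvariant x hx
        exact ⟨c, by simpa using hc⟩
      res := hres
      inertia := fun g x => by
        have hg : g ∈ P.inertia Gal(E/ℚ) := by rw [hin]; trivial
        exact AddSubgroup.mem_inertia.1 hg x
      ordℓ := by rw [ord_natCast hP hℓ hℓP, hramif]
      ordπ := by
        have := (ord_eq_iff (P := P) (k := 1) (x := π)).2 ⟨by simpa using hπ, hπ2⟩
        simpa using this
      finite := inferInstance
      finrank := by rw [NumberField.RingOfIntegers.rank, ← hcard, IsGalois.card_aut_eq_finrank] }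
  exact h.contradiction hodd

lemma card_le_of_unique_index' {G : Type*} [Group G] [Finite G]
    (hcomm : ∀ σ τ : G, σ * τ = τ * σ) {ℓ k : ℕ} (hℓ : ℓ.Prime) (A : Subgroup G)
    (hA : ∀ g : G, g ^ ℓ ^ k ∈ A)
    (huniq : ∀ B₁ B₂ : Subgroup G, A ≤ B₁ → A ≤ B₂ → B₁.index = ℓ → B₂.index = ℓ → B₁ = B₂) :
    Nat.card G ≤ Nat.card A * ℓ ^ k := by
  let : CommGroup G := { ‹Group G› with mul_comm := hcomm }
  exact card_le_of_unique_index hℓ A hA huniq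

/-- In a totally ramified abelian extension for odd `ℓ` there is at most one subgroup of index `ℓ`: two of
them would cut out a totally ramified elementary abelian subextension of degree `ℓ ^ 2`. -/
lemma unique_index {M : Type*} [Field M] [NumberField M] [IsGalois ℚ M]
    (hcomm : ∀ σ τ : Gal(M/ℚ), σ * τ = τ * σ) {ℓ : ℕ} (hℓ : ℓ.Prime) (hodd : 3 ≤ ℓ)
    {P : Ideal (𝓞 M)} (hP : P.IsMaximal) (hℓP : (ℓ : 𝓞 M) ∈ P)
    (hin : P.inertia Gal(M/ℚ) = ⊤) (B₁ B₂ : Subgroup Gal(M/ℚ)) (h1 : B₁.index = ℓ)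
    (h2 : B₂.index = ℓ) : B₁ = B₂ := by
  by_contra hne
  have hn1 := normal_of_comm hcomm B₁
  have hn2 := normal_of_comm hcomm B₂
  let B := B₁ ⊓ B₂
  have hidx : B.index = ℓ ^ 2 := by
    rw [← Subgroup.relIndex_mul_index (inf_le_left : B ≤ B₁), h1, pow_two]
    congr 1
    rw [Subgroup.inf_relIndex_left]
    have hdvd := Subgroup.relIndex_dvd_index_of_normal B₂ B₁
    rw [h2, Nat.dvd_prime hℓ] at hdvd
    refine hdvd.resolve_left fun h3 => hne ?_
    rw [Subgroup.relIndex_eq_one] at h3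
    refine Subgroup.eq_of_le_of_card_ge h3 ?_
    have e1 := Subgroup.index_mul_card B₁
    have e2 := Subgroup.index_mul_card B₂
    rw [h1] at e1
    rw [h2, ← e1] at e2
    exact (Nat.eq_of_mul_eq_mul_left hℓ.pos e2).le
  let E := fixedField B
  have hE : IsGalois ℚ E := isGalois_fixedField hcomm B
  have hcard : Nat.card Gal(E/ℚ) = ℓ ^ 2 := by
    have e1 := card_mul_card (T := E) B
    rw [← Subgroup.index_mul_card B, hidx] at e1
    exact Nat.eq_of_mul_eq_mul_right Nat.card_pos e1
  have hsurj := AlgEquiv.restrictNormalHom_surjective (F := ℚ) (K₁ := E) M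
  refine no_elementary (E := E) (comm_of_algebra hcomm) hℓ hodd hcard (fun σ => ?_)
    (P := P.under (𝓞 E)) (Ideal.isMaximal_comap_of_isIntegral_of_isMaximal P)
    (by rw [Ideal.mem_comap, map_natCast]; exact hℓP) ?_
  · obtain ⟨τ, rfl⟩ := hsurj σ
    rw [← map_pow]
    have hτ : τ ^ ℓ ∈ B := ⟨by
      have := Subgroup.pow_index_mem B₁ τ
      rwa [h1] at this, by
      have := Subgroup.pow_index_mem B₂ τ
      rwa [h2] at this⟩
    ext x
    have e := AlgEquiv.restrictNormal_commutes (τ ^ ℓ) E x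
    exact e.trans (x.2 ⟨_, hτ⟩)
  · rw [eq_top_iff]
    intro σ _
    obtain ⟨τ, rfl⟩ := hsurj σ
    exact restrict_mem_inertia (L := E) (by rw [hin]; trivial)

end odd

end

/-! ### Abelian fields ramified only at `ℓ` -/

section
open NumberField IntermediateField

section onePrime
variable {T M : Type*} [Field T] [NumberField T] [Field M] [NumberField M] [Algebra T M]
  {ℓ m k : ℕ} {ζ : M}

/-- If `T` is ramified only at `ℓ`, then `T(ζ)`, for `ζ` of order `ℓ ^ k`, is totally ramified at `ℓ`. -/
lemma inertia_eq_top [IsGalois ℚ T] [IsGalois ℚ M] (hℓ : ℓ.Prime) [NeZero (ℓ ^ k)]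
    [IsCyclotomicExtension {ℓ ^ k} T M]
    (hcomm : ∀ σ τ : Gal(M/ℚ), σ * τ = τ * σ) (hζ : IsPrimitiveRoot ζ (ℓ ^ k))
    (hun : ∀ q : ℕ, q.Prime → q ≠ ℓ → UnramAt T q) {P : Ideal (𝓞 M)} (hP : P.IsMaximal)
    (hℓP : (ℓ : 𝓞 M) ∈ P) : P.inertia Gal(M/ℚ) = ⊤ := by
  refine eq_top_of_inertia_le _ fun P' hP' => ?_
  obtain ⟨q, hq, hqP'⟩ := exists_prime_mem hP'
  by_cases h : q = ℓ
  · subst h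
    exact (inertia_eq_of_mem hcomm hP hP' hq hℓP hqP').le
  · rw [inertia_compositum_eq_bot (L := T) hζ (hun q hq h)
      (((Nat.coprime_primes hq hℓ).2 h).pow_right k) hP' hqP']
    exact bot_le

/-- A common exponent of `Gal(T/ℚ)` and `(ℤ/n)ˣ` is an exponent of `Gal(T(ζ_n)/ℚ)`. -/
lemma pow_eq_one_of [IsGalois ℚ T] {n e : ℕ} [NeZero n] [IsCyclotomicExtension {n} T M]
    (hζ : IsPrimitiveRoot ζ n) (h1 : Nat.card Gal(T/ℚ) ∣ e) (h2 : ∀ u : (ZMod n)ˣ, u ^ e = 1)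
    (σ : Gal(M/ℚ)) : σ ^ e = 1 := by
  apply resPow_injective (L := T) hζ
  rw [map_pow, map_one]
  refine Prod.ext ?_ (h2 _)
  obtain ⟨d, rfl⟩ := h1
  change (resPow T hζ σ).1 ^ _ = 1
  rw [pow_mul, pow_card_eq_one', one_pow]

/-- An abelian field of odd prime power degree ramified only at that prime `ℓ` is cyclotomic. With `m` as
in `hcard`, put `n = ℓ ^ (m + 1)`: the Galois group of `T(ζ_n)` has at most one subgroup of index `ℓ`,
so it is cyclic up to a subgroup `A` of order at most `ℓ - 1`, and its order is at most
`(ℓ - 1) * ℓ ^ m = φ(n)`. Hence `T(ζ_n) = ℚ(ζ_n)`. -/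
theorem cyc_odd {T : Type u} [Field T] [NumberField T] [IsGalois ℚ T] (hℓ : ℓ.Prime) (hodd : 3 ≤ ℓ)
    (hcommT : ∀ σ τ : Gal(T/ℚ), σ * τ = τ * σ) (hcard : Nat.card Gal(T/ℚ) ∣ ℓ ^ m)
    (hun : ∀ q : ℕ, q.Prime → q ≠ ℓ → UnramAt T q) : Cyc T := by
  have : NeZero (ℓ ^ (m + 1)) := ⟨pow_ne_zero _ hℓ.ne_zero⟩
  let M := CyclotomicField (ℓ ^ (m + 1)) T
  let ζ : M := IsCyclotomicExtension.zeta (ℓ ^ (m + 1)) T M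
  have hζ : IsPrimitiveRoot ζ (ℓ ^ (m + 1)) := IsCyclotomicExtension.zeta_spec _ T M
  have : IsGalois ℚ M := isGalois_compositum (L := T) hζ
  have hcomm : ∀ σ τ : Gal(M/ℚ), σ * τ = τ * σ := comm_compositum (L := T) hζ hcommT
  have htot : (ℓ ^ (m + 1)).totient = ℓ ^ m * (ℓ - 1) := by
    rw [Nat.totient_prime_pow hℓ (Nat.succ_pos m), Nat.succ_sub_one]
  obtain ⟨P, hP, hℓP⟩ := exists_maximal_mem (M := M) hℓ
  have hin := inertia_eq_top hℓ hcomm hζ hun hP hℓP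
  -- the subgroup of `ℓ ^ m`-th powers is killed by `ℓ - 1`
  let A : Subgroup Gal(M/ℚ) :=
    { carrier := {σ | ∃ τ : Gal(M/ℚ), τ ^ ℓ ^ m = σ}
      mul_mem' := by
        rintro _ _ ⟨a, rfl⟩ ⟨b, rfl⟩
        exact ⟨a * b, (Commute.mul_pow (hcomm a b) _)⟩
      one_mem' := ⟨1, one_pow _⟩
      inv_mem' := by
        rintro _ ⟨a, rfl⟩
        exact ⟨a⁻¹, inv_pow _ _⟩ }
  have hAexp : ∀ a : A, a ^ (ℓ - 1) = 1 := by
    rintro ⟨_, τ, rfl⟩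
    refine Subtype.ext ?_
    change (τ ^ ℓ ^ m) ^ (ℓ - 1) = 1
    rw [← pow_mul]
    exact pow_eq_one_of (T := T) hζ (hcard.trans (dvd_mul_right _ _))
      (fun u => by rw [← htot]; exact ZMod.pow_totient u) τ
  have hAco : (Nat.card A).Coprime ℓ := by
    rw [Nat.coprime_comm, hℓ.coprime_iff_not_dvd]
    intro h
    have := Fact.mk hℓ
    obtain ⟨a, ha⟩ := exists_prime_orderOf_dvd_card' ℓ h
    have h1 := orderOf_dvd_of_pow_eq_one (hAexp a)
    rw [ha] at h1
    have := Nat.le_of_dvd (by omega) h1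
    omega
  have hAcard : Nat.card A ≤ ℓ - 1 := by
    have h1 : Nat.card A ∣ ℓ ^ m * (ℓ ^ m * (ℓ - 1)) := by
      refine (Subgroup.card_subgroup_dvd_card A).trans ((card_dvd (L := T) hζ).trans ?_)
      rw [htot]
      exact Nat.mul_dvd_mul_right hcard _
    have h2 := (hAco.pow_right m).dvd_of_dvd_mul_left ((hAco.pow_right m).dvd_of_dvd_mul_left h1)
    exact Nat.le_of_dvd (by omega) h2
  have hle := card_le_of_unique_index' hcomm hℓ (k := m) A (fun g => ⟨g, rfl⟩)
    fun B₁ B₂ _ _ h1 h2 => unique_index hcomm hℓ hodd hP hℓP hin B₁ B₂ h1 h2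
  have hM : Cyc M := by
    refine cyc_of_card_le hζ (hle.trans ?_)
    rw [htot, mul_comm]
    exact Nat.mul_le_mul_left _ hAcard
  exact hM.of_ringHom (algebraMap T M)

lemma two_pow_dvd {x : ℤ} (hx : Odd x) (m : ℕ) :
    (2 : ℤ) ^ (m + 3) ∣ x ^ 2 ^ (m + 1) - 1 := by
  induction m with
  | zero => simpa using Int.eight_dvd_sq_sub_one_of_odd hx
  | succ m ih =>
    have e : x ^ 2 ^ (m + 1 + 1) - 1 = (x ^ 2 ^ (m + 1) - 1) * (x ^ 2 ^ (m + 1) + 1) := by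
      rw [pow_succ 2 (m + 1), pow_mul]; ring
    rw [e, show m + 1 + 3 = (m + 3) + 1 by ring, pow_succ]
    exact mul_dvd_mul ih (hx.pow.add_odd odd_one).two_dvd

lemma units_two_pow (m : ℕ) (u : (ZMod (2 ^ (m + 3)))ˣ) : u ^ 2 ^ (m + 1) = 1 := by
  have : NeZero (2 ^ (m + 3)) := ⟨by positivity⟩
  have hodd : Odd ((u : ZMod (2 ^ (m + 3))).val : ℤ) := by
    have h := ZMod.val_coe_unit_coprime u
    rw [Int.odd_coe_nat, Nat.odd_iff, ← Nat.two_dvd_ne_zero]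
    intro h2
    have h3 := Nat.dvd_gcd h2 (dvd_pow_self 2 (show m + 3 ≠ 0 by omega))
    rw [h] at h3
    omega
  have h := two_pow_dvd hodd m
  apply Units.ext
  have h2 : (((((u : ZMod (2 ^ (m + 3))).val : ℤ) ^ 2 ^ (m + 1) - 1 : ℤ)) : ZMod (2 ^ (m + 3))) = 0 := by
    rw [ZMod.intCast_zmod_eq_zero_iff_dvd]
    exact_mod_cast h
  push_cast at h2
  rw [ZMod.natCast_zmod_val, sub_eq_zero] at h2
  rw [Units.val_pow_eq_pow_val, h2, Units.val_one]

/-- Complex conjugation on a Galois extension of `ℚ`, with respect to an embedding `φ`. -/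
lemma exists_conj [IsGalois ℚ M] (φ : M →+* ℂ) :
    ∃ c : Gal(M/ℚ), ∀ x, φ (c x) = starRingEnd ℂ (φ x) := by
  obtain ⟨σ, hσ⟩ := ComplexEmbedding.exists_comp_symm_eq_of_comp_eq (k := ℚ) φ
    (ComplexEmbedding.conjugate φ) (Subsingleton.elim _ _)
  exact ⟨σ.symm, fun x => RingHom.congr_fun hσ x⟩

/-- If every odd prime is unramified in `M` and `√d ∈ M` for a squarefree `d > 1`, then `d = 2`: an odd
prime factor of `d` would ramify. -/
lemma eq_two_of_sq {d : ℕ} (hd : Squarefree d) {x : M} (hx : x ^ 2 = d)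
    (hun : ∀ q : ℕ, q.Prime → q ≠ 2 → UnramAt M q) (h1 : d ≠ 1) : d = 2 := by
  have hprime : ∀ {q : ℕ}, q.Prime → q ∣ d → q = 2 := by
    intro q hq hqd
    by_contra hne
    obtain ⟨P, hP, hqP⟩ := exists_maximal_mem (M := M) hq
    have hord : ord P (q : 𝓞 M) = 1 := by rw [ord_natCast hP hq hqP, hun q hq hne P hP hqP]; rfl
    obtain ⟨e, rfl⟩ := hqd
    have hqe : q.Coprime e := (hq.coprime_iff_not_dvd).2 fun h => by
      have := hd q (Nat.mul_dvd_mul_left q h)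
      exact hq.one_lt.ne' (Nat.isUnit_iff.1 this)
    have heP : (e : 𝓞 M) ∉ P := natCast_notMem hP.ne_top hqP hqe
    have hint : IsIntegral ℤ x := by
      refine IsIntegral.of_pow (n := 2) (by norm_num) ?_
      rw [hx]
      exact map_natCast (algebraMap ℤ M) (q * e) ▸ isIntegral_algebraMap
    let y : 𝓞 M := ⟨x, hint⟩
    have hy : y ^ 2 = (q : 𝓞 M) * e := by
      apply RingOfIntegers.ext
      change x ^ 2 = _
      rw [hx]; push_cast; rfl
    have hyP : y ∈ P := hP.isPrime.mem_of_pow_mem 2 (by rw [hy]; exact Ideal.mul_mem_right _ _ hqP)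
    have hqe2 : (e : 𝓞 M) * q ∈ P ^ 2 := by
      rw [mul_comm, ← hy]; exact Ideal.pow_mem_pow hyP 2
    have hq2 := (Ideal.IsPrime.mul_mem_pow P hqe2).resolve_left heP
    rw [← le_ord_iff, hord] at hq2
    exact absurd hq2 (by norm_num)
  have h2 := Nat.eq_prime_pow_of_unique_prime_dvd hd.ne_zero hprime
  obtain h3 | h3 := Nat.eq_zero_or_pos d.primeFactorsList.length
  · rw [h3, pow_zero] at h2; exact absurd h2 h1
  · rw [h2] at hd
    rw [h2, ((Nat.squarefree_pow_iff (by norm_num) h3.ne').1 hd).2, pow_one]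

/-- A real quadratic subfield of a field unramified outside `2` is `ℚ(√2)`. The subfield is given as the
fixed field of a subgroup `B` of index `2` containing complex conjugation `c`. -/
lemma exists_sqrt_two [IsGalois ℚ M] (hun : ∀ q : ℕ, q.Prime → q ≠ 2 → UnramAt M q)
    {φ : M →+* ℂ} {c : Gal(M/ℚ)} (hc : ∀ x, φ (c x) = starRingEnd ℂ (φ x))
    {B : Subgroup Gal(M/ℚ)} (hcB : c ∈ B) (hB : B.index = 2) :
    ∃ x : M, x ^ 2 = 2 ∧ ∀ g : Gal(M/ℚ), g ∈ B ↔ g x = x := by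
  obtain ⟨σ, hσ⟩ : ∃ σ, σ ∉ B := by
    by_contra! h
    have : B = ⊤ := (Subgroup.eq_top_iff' B).2 h
    rw [this, Subgroup.index_top] at hB
    omega
  obtain ⟨z, hz, hσz⟩ : ∃ z ∈ fixedField B, σ z ≠ z := by
    by_contra! h
    apply hσ
    rw [← IntermediateField.fixingSubgroup_fixedField B, IntermediateField.mem_fixingSubgroup_iff]
    exact h
  rw [mem_fixedField_iff] at hz
  let x := z - σ z
  have hx0 : x ≠ 0 := sub_ne_zero.2 (Ne.symm hσz)
  have hmul : ∀ {a b : Gal(M/ℚ)}, a * b ∈ B ↔ (a ∈ B ↔ b ∈ B) :=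
    Subgroup.mul_mem_iff_of_index_two hB
  have hin : ∀ g ∈ B, g x = x := by
    intro g hg
    have h1 : σ⁻¹ * (g * σ) ∈ B := by simp [hmul, hσ, hg]
    have h2 := hz _ h1
    have h3 : g (σ z) = σ z := by
      have := congrArg σ h2
      simpa [AlgEquiv.mul_apply, ← AlgEquiv.aut_inv] using this
    rw [map_sub, hz g hg, h3]
  have hσx : σ x = -x := by
    have h1 : σ * σ ∈ B := by simp [hmul]
    have h2 := hz _ h1
    rw [AlgEquiv.mul_apply] at h2
    rw [map_sub, h2, neg_sub]
  have hout : ∀ g ∉ B, g x = -x := by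
    intro g hg
    have h1 : σ⁻¹ * g ∈ B := by simp [hmul, hσ, hg]
    have h2 := congrArg σ (hin _ h1)
    rw [hσx] at h2
    simpa [AlgEquiv.mul_apply, ← AlgEquiv.aut_inv] using h2
  obtain ⟨r, hr⟩ : ∃ r : ℚ, (r : M) = x ^ 2 := by
    have h1 : x ^ 2 ∈ (⊥ : IntermediateField ℚ M) := by
      rw [IsGalois.mem_bot_iff_fixed]
      intro g
      rw [map_pow]
      by_cases hg : g ∈ B
      · rw [hin g hg]
      · rw [hout g hg, neg_sq]
    obtain ⟨r, hr⟩ := IntermediateField.mem_bot.1 h1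
    exact ⟨r, by simpa using hr⟩
  have hr0 : 0 < r := by
    have h1 : starRingEnd ℂ (φ x) = φ x := by rw [← hc, hin c hcB]
    obtain ⟨t, ht⟩ := Complex.conj_eq_iff_real.1 h1
    have h2 : ((r : ℝ) : ℂ) = ((t ^ 2 : ℝ) : ℂ) := by
      have := congrArg φ hr
      rw [map_ratCast, map_pow, ht] at this
      push_cast
      exact this
    have h3 : (r : ℝ) = t ^ 2 := Complex.ofReal_injective h2
    have ht0 : t ≠ 0 := by
      rintro rfl
      rw [Complex.ofReal_zero, map_eq_zero] at ht
      exact hx0 ht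
    have h4 : (0 : ℝ) < r := by rw [h3]; positivity
    exact_mod_cast h4
  obtain ⟨d, e, hde, hd⟩ := Nat.sq_mul_squarefree (r.num.toNat * r.den)
  have hN0 : r.num.toNat * r.den ≠ 0 := by
    have h1 := Rat.num_pos.2 hr0
    have h2 := r.den_pos
    exact Nat.mul_ne_zero (by omega) (by omega)
  have he0 : (e : ℚ) ≠ 0 := by
    rintro h
    have : e = 0 := by exact_mod_cast h
    rw [this] at hde
    apply hN0
    rw [← hde]
    ring
  -- rescale `x` by a rational number, so that its square is squarefree
  let y : M := ((r.den / e : ℚ) : M) * x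
  have hs0 : (r.den / e : ℚ) ≠ 0 := div_ne_zero (by exact_mod_cast r.den_ne_zero) he0
  have hsM : ((r.den / e : ℚ) : M) ≠ 0 := by exact_mod_cast hs0
  have hfix : ∀ g : Gal(M/ℚ), g y = ((r.den / e : ℚ) : M) * g x := fun g => by
    rw [map_mul, map_ratCast]
  have hy : y ^ 2 = (d : M) := by
    have h1 : (r.den / e : ℚ) ^ 2 * r = d := by
      have h2 : ((e : ℚ) ^ 2 * d) = r.num.toNat * r.den := by exact_mod_cast hde
      have h3 : ((r.num.toNat : ℕ) : ℚ) = r.num := by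
        have := Int.toNat_of_nonneg (Rat.num_pos.2 hr0).le
        exact_mod_cast this
      rw [h3] at h2
      have h4 : r * r.den = r.num := Rat.mul_den_eq_num r
      rw [← h4] at h2
      field_simp
      linear_combination -h2
    rw [mul_pow, ← hr]
    exact_mod_cast congrArg (Rat.cast : ℚ → M) h1
  have hne : -x ≠ x := fun h => hx0 (by
    have h2 : 2 * x = (0 : M) := by rw [two_mul]; exact neg_eq_iff_add_eq_zero.1 h
    exact (mul_eq_zero.1 h2).resolve_left two_ne_zero)
  have hmem : ∀ g : Gal(M/ℚ), g ∈ B ↔ g y = y := by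
    intro g
    rw [hfix]
    constructor
    · intro hg; rw [hin g hg]
    · intro h
      by_contra hg
      rw [hout g hg] at h
      exact hne (mul_left_cancel₀ hsM h)
  refine ⟨y, ?_, hmem⟩
  rw [hy, eq_two_of_sq hd hy hun ?_, Nat.cast_ofNat]
  rintro rfl
  rw [Nat.cast_one, sq_eq_one_iff] at hy
  exact hσ ((hmem σ).2 (by rcases hy with h | h <;> simp [h]))

/-- An abelian field of `2`-power degree ramified only at `2` is cyclotomic. With `n = 2 ^ (m + 3)`, the
quotient of the Galois group of `T(ζ_n)` by complex conjugation has exponent dividing `2 ^ (m + 1)`, and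
at most one subgroup of index `2`, since `ℚ(√2)` is the only real quadratic field ramified only at
`2`. So `T(ζ_n)` has degree at most `2 * 2 ^ (m + 1) = φ(n)`, and it equals `ℚ(ζ_n)`. -/
theorem cyc_two {T : Type u} [Field T] [NumberField T] [IsGalois ℚ T]
    (hcommT : ∀ σ τ : Gal(T/ℚ), σ * τ = τ * σ) (hcard : Nat.card Gal(T/ℚ) ∣ 2 ^ m)
    (hun : ∀ q : ℕ, q.Prime → q ≠ 2 → UnramAt T q) : Cyc T := by
  have : NeZero (2 ^ (m + 3)) := ⟨by positivity⟩
  let M := CyclotomicField (2 ^ (m + 3)) T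
  let ζ : M := IsCyclotomicExtension.zeta (2 ^ (m + 3)) T M
  have hζ : IsPrimitiveRoot ζ (2 ^ (m + 3)) := IsCyclotomicExtension.zeta_spec _ T M
  have : IsGalois ℚ M := isGalois_compositum (L := T) hζ
  have hcomm : ∀ σ τ : Gal(M/ℚ), σ * τ = τ * σ := comm_compositum (L := T) hζ hcommT
  have hunM : ∀ q : ℕ, q.Prime → q ≠ 2 → UnramAt M q := by
    intro q hq hne P hP hqP
    have h1 := inertia_compositum_eq_bot (L := T) hζ (hun q hq hne)
      (((Nat.coprime_primes hq Nat.prime_two).2 hne).pow_right _) hP hqP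
    rw [← card_inertia_eq_int Gal(M/ℚ) P, h1]
    exact Subgroup.card_bot
  obtain ⟨φ⟩ : Nonempty (M →+* ℂ) := inferInstance
  obtain ⟨c, hc⟩ := exists_conj φ
  have hc2 : c ^ 2 = 1 := by
    ext x
    apply φ.injective
    rw [pow_two, AlgEquiv.mul_apply, hc, hc, Complex.conj_conj]
    rfl
  have hA : Nat.card (Subgroup.zpowers c) ≤ 2 := by
    rw [Nat.card_zpowers]
    exact orderOf_le_of_pow_eq_one two_pos hc2
  have hle := card_le_of_unique_index' hcomm Nat.prime_two (k := m + 1) (Subgroup.zpowers c)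
    (fun g => by
      rw [pow_eq_one_of (T := T) hζ (hcard.trans (pow_dvd_pow 2 m.le_succ)) (units_two_pow m) g]
      exact one_mem _)
    (fun B₁ B₂ hc1 hc2 h1 h2 => by
      rw [Subgroup.zpowers_le] at hc1 hc2
      obtain ⟨x₁, hx₁, hB₁⟩ := exists_sqrt_two hunM hc hc1 h1
      obtain ⟨x₂, hx₂, hB₂⟩ := exists_sqrt_two hunM hc hc2 h2
      ext g
      rw [hB₁, hB₂]
      rcases sq_eq_sq_iff_eq_or_eq_neg.1 (hx₁.trans hx₂.symm) with h | h
      · rw [h]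
      · rw [h, map_neg, neg_inj])
  have hM : Cyc M := by
    refine cyc_of_card_le hζ (hle.trans ?_)
    rw [Nat.totient_prime_pow Nat.prime_two (by omega), show m + 3 - 1 = (m + 1) + 1 by omega,
      pow_succ 2 (m + 1), mul_comm]
    simpa using Nat.mul_le_mul_left (2 ^ (m + 1)) hA
  exact hM.of_ringHom (algebraMap T M)

end onePrime

end

/-! ### Reduction to prime power degree -/

section
open NumberField IntermediateField

lemma unramAt_of_not_dvd_discr {K : Type*} [Field K] [NumberField K] {q : ℕ} (hq : q.Prime)
    (h : ¬ (q : ℤ) ∣ discr K) : UnramAt K q := by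
  intro P hP hqP
  have h1 := (not_dvd_discr_iff_forall_mem K (𝓞 K) (Nat.prime_iff_prime_int.1 hq)).1 h P hP.isPrime
    (by simpa using hqP)
  exact Ideal.ramificationIdx_eq_one_iff.2 h1

/-- Abelian fields of prime power degree are cyclotomic. -/
theorem cyc_of_prime_pow {K : Type u} [Field K] [NumberField K] [IsGalois ℚ K]
    (hcomm : ∀ σ τ : Gal(K/ℚ), σ * τ = τ * σ) {ℓ m : ℕ} (hℓ : ℓ.Prime)
    (hcard : Nat.card Gal(K/ℚ) ∣ ℓ ^ m) : Cyc K := by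
  refine cyc_of_unramified_outside hℓ ?_ ((discr K).natAbs.primeFactors.erase ℓ) ?_ K hcomm hcard ?_
  · intro T _ _ _ hcommT hcardT hun
    obtain rfl | hodd := hℓ.eq_two_or_odd'
    · exact cyc_two hcommT hcardT hun
    · have h2 : ℓ ≠ 2 := by rintro rfl; exact absurd hodd (by decide)
      exact cyc_odd hℓ (by have := hℓ.two_le; omega) hcommT hcardT hun
  · intro q hq
    rw [Finset.mem_erase] at hq
    exact ⟨Nat.prime_of_mem_primeFactors hq.2, hq.1⟩
  · intro q hq hqS hne
    refine unramAt_of_not_dvd_discr hq fun h => hqS ?_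
    rw [Finset.mem_erase, Nat.mem_primeFactors]
    exact ⟨hne, hq, Int.natCast_dvd.1 h, Int.natAbs_ne_zero.2 (discr_ne_zero K)⟩

/-- The subgroup of `a`-torsion elements of an abelian group. -/
def torsionSubgroup {G : Type*} [Group G] (hcomm : ∀ σ τ : G, σ * τ = τ * σ) (a : ℕ) :
    Subgroup G where
  carrier := {g | g ^ a = 1}
  one_mem' := one_pow a
  mul_mem' {x y} hx hy := (Commute.mul_pow (hcomm x y) a).trans (by
    rw [show x ^ a = 1 from hx, show y ^ a = 1 from hy, one_mul])
  inv_mem' {x} hx := (inv_pow x a).trans (by rw [show x ^ a = 1 from hx, inv_one])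

lemma one_lt_card_torsionSubgroup {G : Type*} [Group G] [Finite G]
    (hcomm : ∀ σ τ : G, σ * τ = τ * σ) {a : ℕ} (ha : a ≠ 1) (hdvd : a ∣ Nat.card G) :
    1 < Nat.card (torsionSubgroup hcomm a) := by
  obtain ⟨p, hp, hpa⟩ := Nat.exists_prime_and_dvd ha
  have : Fact p.Prime := ⟨hp⟩
  obtain ⟨g, hg⟩ := exists_prime_orderOf_dvd_card' p (hpa.trans hdvd)
  rw [Subgroup.one_lt_card_iff_ne_bot]
  intro h
  have h1 : g ∈ torsionSubgroup hcomm a := orderOf_dvd_iff_pow_eq_one.1 (hg ▸ hpa)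
  rw [h, Subgroup.mem_bot] at h1
  rw [h1, orderOf_one] at hg
  exact hp.one_lt.ne hg

lemma torsionSubgroup_inf {G : Type*} [Group G] (hcomm : ∀ σ τ : G, σ * τ = τ * σ) {a b : ℕ}
    (hab : a.Coprime b) : torsionSubgroup hcomm a ⊓ torsionSubgroup hcomm b = ⊥ := by
  rw [eq_bot_iff]
  rintro g ⟨h1, h2⟩
  rw [Subgroup.mem_bot, ← orderOf_eq_one_iff]
  exact Nat.eq_one_of_dvd_coprimes hab (orderOf_dvd_iff_pow_eq_one.2 h1)
    (orderOf_dvd_iff_pow_eq_one.2 h2)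

/-- Abelian number fields are cyclotomic: an abelian Galois group of order `ab`, with `a` and `b`
coprime, makes the field the compositum of two proper subfields. -/
theorem cyc_of_comm (n : ℕ) : ∀ (K : Type u) [Field K] [NumberField K] [IsGalois ℚ K],
    (∀ σ τ : Gal(K/ℚ), σ * τ = τ * σ) → Nat.card Gal(K/ℚ) = n → Cyc K := by
  induction n using Nat.strong_induction_on with
  | _ n ih =>
    intro K _ _ _ hcomm hn
    have hn0 : n ≠ 0 := by rw [← hn]; exact Nat.card_pos.ne'
    by_cases hn1 : n = 1
    · exact cyc_of_prime_pow (m := 0) hcomm Nat.prime_two (by rw [hn, hn1, pow_zero])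
    have hp := Nat.minFac_prime hn1
    obtain ⟨k, b, hb, hnb⟩ := Nat.exists_eq_pow_mul_and_not_dvd hn0 n.minFac hp.ne_one
    by_cases hb1 : b = 1
    · exact cyc_of_prime_pow (m := k) hcomm hp (by rw [hn, ← mul_one (_ ^ k), ← hb1, ← hnb])
    have hk : k ≠ 0 := by
      rintro rfl
      rw [pow_zero, one_mul] at hnb
      exact hb (hnb ▸ n.minFac_dvd)
    have hco : (n.minFac ^ k).Coprime b := ((hp.coprime_iff_not_dvd).2 hb).pow_left k
    have ha1 : n.minFac ^ k ≠ 1 := (Nat.one_lt_pow hk hp.one_lt).ne'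
    have hsub : ∀ J : Subgroup Gal(K/ℚ), 1 < Nat.card J → Cyc (fixedField J) := by
      intro J hJ
      have := isGalois_fixedField hcomm J
      refine ih _ ?_ (fixedField J) (comm_of_algebra hcomm) rfl
      rw [← hn, ← card_mul_card (T := fixedField J) J]
      exact lt_mul_of_one_lt_right Nat.card_pos hJ
    refine Cyc.of_sup_eq_top (E₁ := fixedField (torsionSubgroup hcomm (n.minFac ^ k)))
      (E₂ := fixedField (torsionSubgroup hcomm b)) ?_
      (hsub _ (one_lt_card_torsionSubgroup hcomm ha1 (Dvd.intro _ (hn.trans hnb).symm)))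
      (hsub _ (one_lt_card_torsionSubgroup hcomm hb1 (Dvd.intro_left _ (hn.trans hnb).symm)))
    rw [← IsGalois.fixedField_fixingSubgroup (_ ⊔ _), IntermediateField.fixingSubgroup_sup,
      IntermediateField.fixingSubgroup_fixedField, IntermediateField.fixingSubgroup_fixedField,
      torsionSubgroup_inf hcomm hco, IntermediateField.fixedField_bot]

end

end KW

/-- **Kronecker–Weber theorem.** Every finite Galois extension `K` of `ℚ` whose Galois
group `Gal(K/ℚ)` is abelian embeds into a cyclotomic field: there exists a positive
integer `N` and a `ℚ`-algebra homomorphism from `K` into the `N`-th cyclotomic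
field `ℚ(ζ_N)`. -/
theorem kronecker_weber (K : Type*) [Field K] [Algebra ℚ K] [FiniteDimensional ℚ K]
    [IsGalois ℚ K] (habelian : ∀ σ τ : K ≃ₐ[ℚ] K, σ * τ = τ * σ) :
    ∃ N : ℕ+, Nonempty (K →ₐ[ℚ] CyclotomicField N ℚ) := by
  have hchar : CharZero K := algebraRat.charZero K
  -- `NumberField K` refers to the canonical `ℚ`-algebra structure, which is the only one
  rename_i h _ _
  obtain rfl : h = DivisionRing.toRatAlgebra := Subsingleton.elim _ _
  have : NumberField K := ⟨⟩
  exact (KW.cyc_of_comm _ K habelian rfl).exists_algHom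
end

section
/- Let k be a field, let k⟦t⟧ be the ring of formal power series over k and k((t)) its field of fractions, the field of formal Laurent series. For every invertible n × n matrix g over k((t)) there exist matrices k₁, k₂ in GL_n(k⟦t⟧) (viewed in GL_n(k((t))) via the inclusion k⟦t⟧ ⊆ k((t))) and a weakly decreasing sequence of integers d₁ ≥ d₂ ≥ … ≥ d_n such that g = k₁ · D · k₂, where D is the diagonal matrix with diagonal entries t^{d₁}, …, t^{d_n}; moreover, the sequence (d₁, …, d_n) is uniquely determined by g. -/
/-!
Existence. Multiplying `g` by a power of `t` makes its entries integral, so that its columns span a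
submodule of full rank in `k⟦t⟧ⁿ`. The stacked bases theorem over a principal ideal domain
(`Submodule.exists_smith_normal_form_of_rank_eq`) gives a basis `b` of `k⟦t⟧ⁿ` and scalars `aᵢ` such
that the `aᵢ bᵢ` form a basis of this submodule. Each `aᵢ` is a unit times a power of `t`; absorbing
the units into `b` and sorting the exponents gives the decomposition, the two invertible factors
being change of basis matrices (`exists_smith_of_det_ne_zero`, `exists_decomposition`).

Uniqueness. If `t^d P = Q t^{d'}` with `P`, `Q` integral, `P` invertible and `d`, `d'` weakly
decreasing, then `d' ≤ d`. Indeed, if `d i < d' i`, then `P a b` is divisible by `t` whenever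
`b ≤ i ≤ a`. Modulo `t`, the first `i + 1` columns of `P` are then supported on only `i` rows,
so `t ∣ det P` (`dvd_det_of_block`), which is absurd (`exponents_le`).
-/

open scoped MatrixGroups

/-- A square matrix whose entries in the rows `≥ i` and columns `≤ i` are all divisible by `x` has
determinant divisible by `x`: no permutation maps the `i + 1` columns `≤ i` into the `i` rows `< i`,
so every term of the Leibniz expansion has a factor in the block. -/
theorem dvd_det_of_block {R : Type*} [CommRing R] {n : ℕ} (x : R) (P : Matrix (Fin n) (Fin n) R)
    (i : Fin n) (h : ∀ a b, i ≤ a → b ≤ i → x ∣ P a b) : x ∣ P.det := by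
  rw [Matrix.det_apply]
  refine Finset.dvd_sum fun σ _ => ?_
  obtain ⟨b, hb, hσ⟩ : ∃ b, b ≤ i ∧ i ≤ σ b := by
    by_contra! hcon
    have := Finset.card_le_card_of_injOn (s := Finset.Iic i) (t := Finset.Iio i) σ
      (fun b hb => by simpa using hcon b (by simpa using hb)) σ.injective.injOn
    simp at this
  have : x ∣ ∏ j, P (σ j) j := (h _ _ hσ hb).trans (Finset.dvd_prod_of_mem _ (Finset.mem_univ b))
  rw [Units.smul_def, zsmul_eq_mul]
  exact this.mul_left _

/-- Smith normal form over a discrete valuation ring, with sorted exponents. -/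
theorem exists_smith_of_det_ne_zero {R : Type*} [CommRing R] [IsDomain R]
    [IsDiscreteValuationRing R] {ϖ : R} (hϖ : Irreducible ϖ) {n : ℕ}
    (A : Matrix (Fin n) (Fin n) R) (hA : A.det ≠ 0) :
    ∃ e : Fin n → ℕ, Antitone e ∧ ∃ U V : GL (Fin n) R,
      A = (U : Matrix (Fin n) (Fin n) R) * Matrix.diagonal (fun i => ϖ ^ e i) *
        (V : Matrix (Fin n) (Fin n) R) := by
  classical
  have hinj : Function.Injective A.mulVecLin := by
    rw [← LinearMap.ker_eq_bot, LinearMap.ker_eq_bot']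
    intro v hv
    exact Matrix.eq_zero_of_mulVec_eq_zero hA hv
  let E := LinearEquiv.ofInjective A.mulVecLin hinj
  let c := (Pi.basisFun R (Fin n)).map E
  obtain ⟨b, a, ab, hab⟩ := Submodule.exists_smith_normal_form_of_rank_eq
    (Pi.basisFun R (Fin n)) (N := LinearMap.range A.mulVecLin) E.finrank_eq.symm
  have ha : ∀ i, a i ≠ 0 := fun i h0 => ab.ne_zero i <| by
    ext1
    simp [hab, h0]
  choose e u hu using fun i => IsDiscreteValuationRing.eq_unit_mul_pow_irreducible (ha i) hϖ
  let σ := Tuple.sort (fun i => OrderDual.toDual (e i))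
  have hσ : Monotone ((fun i => OrderDual.toDual (e i)) ∘ σ) := Tuple.monotone_sort _
  let b' := (b.unitsSMul u).reindex σ.symm
  let ab' := ab.reindex σ.symm
  have hab' : ∀ i, (ab' i : Fin n → R) = ϖ ^ e (σ i) • b' i := fun i => by
    simp only [ab', b', Module.Basis.reindex_apply, Equiv.symm_symm, hab, hu,
      Module.Basis.unitsSMul_apply, Units.smul_def, smul_smul]
    rw [mul_comm]
  have hc : ∀ j i, (c j : Fin n → R) i = A i j := fun j i => by
    simp [c, E]
  refine ⟨fun i => e (σ i), fun i j hij => hσ hij,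
    ⟨(Pi.basisFun R (Fin n)).toMatrix b', b'.toMatrix (Pi.basisFun R (Fin n)),
      Module.Basis.toMatrix_mul_toMatrix_flip _ _, Module.Basis.toMatrix_mul_toMatrix_flip _ _⟩,
    ⟨ab'.toMatrix c, c.toMatrix ab',
      Module.Basis.toMatrix_mul_toMatrix_flip _ _, Module.Basis.toMatrix_mul_toMatrix_flip _ _⟩, ?_⟩
  ext i j
  have key := congrArg (fun v : LinearMap.range A.mulVecLin => (v : Fin n → R) i)
    (ab'.sum_repr (c j))
  simp only [hc] at key
  rw [← key, Matrix.mul_apply]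
  simp only [AddSubmonoidClass.coe_finsetSum, Finset.sum_apply, Submodule.coe_smul, hab',
    Pi.smul_apply, smul_eq_mul, Matrix.mul_diagonal, Module.Basis.toMatrix_apply,
    Pi.basisFun_repr]
  exact Finset.sum_congr rfl fun l _ => by ring

/-- If `ϖ^d P = Q ϖ^{d'}` with `P` invertible and `Q` integral, then `d' ≤ d`. -/
theorem exponents_le {R K : Type*} [CommRing R] [Field K] [Algebra R K]
    [FaithfulSMul R K] {ϖ : R} (hϖ : Prime ϖ) {n : ℕ} {d d' : Fin n → ℤ}
    (hd : Antitone d) (hd' : Antitone d') (P Q : Matrix (Fin n) (Fin n) R) (hP : IsUnit P.det)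
    (h : Matrix.diagonal (fun i => algebraMap R K ϖ ^ d i) * P.map (algebraMap R K) =
      Q.map (algebraMap R K) * Matrix.diagonal (fun i => algebraMap R K ϖ ^ d' i)) :
    d' ≤ d := by
  intro i
  by_contra! hlt
  refine hϖ.not_isUnit (isUnit_of_dvd_unit (dvd_det_of_block ϖ P i fun a b hia hbi => ?_) hP)
  have hlt' : d a < d' b := (hd hia).trans_lt (hlt.trans_le (hd' hbi))
  obtain ⟨m, hm⟩ := Int.le.dest (Int.add_one_le_of_lt hlt')
  have hinj := FaithfulSMul.algebraMap_injective R K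
  have h0 : algebraMap R K ϖ ≠ 0 := (map_ne_zero_iff _ hinj).2 hϖ.ne_zero
  have hab := congrFun (congrFun h a) b
  rw [Matrix.diagonal_mul, Matrix.mul_diagonal, ← hm, zpow_add₀ h0, zpow_add₀ h0, zpow_one,
    zpow_natCast, Matrix.map_apply, Matrix.map_apply] at hab
  refine ⟨ϖ ^ m * Q a b, hinj (mul_left_cancel₀ (zpow_ne_zero (d a) h0) ?_)⟩
  rw [hab]
  simp only [map_mul, map_pow]
  ring

/-- Uniqueness, as an inequality between the exponents of two decompositions of the same matrix. -/
theorem exponents_le_of_decomposition {R K : Type*} [CommRing R] [Field K] [Algebra R K]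
    [FaithfulSMul R K] {ϖ : R} (hϖ : Prime ϖ) {n : ℕ} {d d' : Fin n → ℤ}
    (hd : Antitone d) (hd' : Antitone d') (U V U' V' : GL (Fin n) R)
    (h : (Matrix.GeneralLinearGroup.map (algebraMap R K) U : Matrix (Fin n) (Fin n) K) *
        Matrix.diagonal (fun i => algebraMap R K ϖ ^ d i) *
        (Matrix.GeneralLinearGroup.map (algebraMap R K) V : Matrix (Fin n) (Fin n) K) =
      (Matrix.GeneralLinearGroup.map (algebraMap R K) U' : Matrix (Fin n) (Fin n) K) *
        Matrix.diagonal (fun i => algebraMap R K ϖ ^ d' i) *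
        (Matrix.GeneralLinearGroup.map (algebraMap R K) V' : Matrix (Fin n) (Fin n) K)) :
    d' ≤ d := by
  refine exponents_le (K := K) hϖ hd hd' ((V * V'⁻¹ : GL (Fin n) R) : Matrix _ _ R)
    ((U⁻¹ * U' : GL (Fin n) R) : Matrix _ _ R)
    ((Matrix.isUnit_iff_isUnit_det _).1 (Units.isUnit _)) ?_
  change _ * (Matrix.GeneralLinearGroup.map (algebraMap R K) (V * V'⁻¹)).val =
    (Matrix.GeneralLinearGroup.map (algebraMap R K) (U⁻¹ * U')).val * _
  rw [map_mul, map_mul, map_inv, map_inv, Units.val_mul, Units.val_mul, ← mul_assoc,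
    Units.mul_inv_eq_iff_eq_mul, mul_assoc, mul_assoc, Units.eq_inv_mul_iff_mul_eq, ← mul_assoc, h,
    mul_assoc]

/-- Existence of the decomposition over a discrete valuation ring, reduced to the Smith normal form
by clearing denominators with a power of the uniformizer. -/
theorem exists_decomposition {R K : Type*} [CommRing R] [IsDomain R]
    [IsDiscreteValuationRing R] [Field K] [Algebra R K] [FaithfulSMul R K] {ϖ : R}
    (hϖ : Irreducible ϖ) [IsLocalization (Submonoid.powers ϖ) K] {n : ℕ} (g : GL (Fin n) K) :
    ∃ d : Fin n → ℤ, Antitone d ∧ ∃ U V : GL (Fin n) R,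
      (g : Matrix (Fin n) (Fin n) K) =
        (Matrix.GeneralLinearGroup.map (algebraMap R K) U : Matrix (Fin n) (Fin n) K) *
        Matrix.diagonal (fun i => algebraMap R K ϖ ^ d i) *
        (Matrix.GeneralLinearGroup.map (algebraMap R K) V : Matrix (Fin n) (Fin n) K) := by
  have h0 : algebraMap R K ϖ ≠ 0 :=
    (map_ne_zero_iff _ (FaithfulSMul.algebraMap_injective R K)).2 hϖ.ne_zero
  -- a common denominator of all the entries, chosen to be a power of the uniformizer
  obtain ⟨⟨_, m, rfl⟩, hm⟩ := IsLocalization.exist_integer_multiples_of_finite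
    (Submonoid.powers ϖ)
    (fun p : Fin n × Fin n => (g : Matrix (Fin n) (Fin n) (K)) p.1 p.2)
  choose B hB using hm
  set x := algebraMap R K ϖ with hx
  let A : Matrix (Fin n) (Fin n) (R) := Matrix.of fun i j => B (i, j)
  have hAg : A.map (algebraMap R K) =
      x ^ m • (g : Matrix (Fin n) (Fin n) (K)) := by
    ext1 i j
    have := hB (i, j)
    simp only [Algebra.smul_def, map_pow] at this
    simpa [A] using this
  have hA : A.det ≠ 0 := by
    intro hdet
    have h1 := congrArg Matrix.det hAg
    rw [← RingHom.mapMatrix_apply, ← RingHom.map_det, hdet, map_zero, Matrix.det_smul] at h1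
    exact mul_ne_zero (pow_ne_zero _ (pow_ne_zero _ h0))
      ((Matrix.isUnit_iff_isUnit_det _).1 g.isUnit).ne_zero h1.symm
  obtain ⟨e, he, U, V, hUV⟩ := exists_smith_of_det_ne_zero hϖ A hA
  refine ⟨fun i => (e i : ℤ) - m, fun i j hij => ?_, U, V, ?_⟩
  · have := he hij
    simp only
    omega
  have hD : Matrix.diagonal (fun i => x ^ ((e i : ℤ) - m)) =
      (x ^ m)⁻¹ • (Matrix.diagonal fun i => ϖ ^ e i).map
        (algebraMap R K) := by
    rw [Matrix.diagonal_map (map_zero _), ← Matrix.diagonal_smul]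
    congr 1
    ext1 i
    simp only [Pi.smul_apply, map_pow, smul_eq_mul, ← hx]
    rw [zpow_sub₀ h0, zpow_natCast, zpow_natCast, div_eq_inv_mul]
  rw [hD, Matrix.mul_smul, Matrix.smul_mul]
  rw [eq_inv_smul_iff₀ (pow_ne_zero m h0), ← hAg, hUV, Matrix.map_mul, Matrix.map_mul]
  rfl

/-- **Cartan decomposition for `GL_n` over `k((t))`.** Let `k` be a field, `k⟦t⟧` the ring
of formal power series and `k((t))` its fraction field of formal Laurent series. Every
invertible `n × n` matrix `g` over `k((t))` can be written as `g = k₁ · D · k₂` with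
`k₁, k₂ ∈ GL_n(k⟦t⟧)` and `D` the diagonal matrix with entries `t^{d₁}, …, t^{d_n}` for a
weakly decreasing sequence of integers `d₁ ≥ … ≥ d_n`, and the sequence `(d₁, …, d_n)` is
uniquely determined by `g`. -/
theorem cartan_decomposition_laurentSeries (k : Type*) [Field k] (n : ℕ)
    (g : GL (Fin n) (LaurentSeries k)) :
    ∃! d : Fin n → ℤ, Antitone d ∧
      ∃ k₁ k₂ : GL (Fin n) (PowerSeries k),
        (g : Matrix (Fin n) (Fin n) (LaurentSeries k)) =
          (Matrix.GeneralLinearGroup.map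
              (algebraMap (PowerSeries k) (LaurentSeries k)) k₁ :
            Matrix (Fin n) (Fin n) (LaurentSeries k)) *
          Matrix.diagonal
            (fun i => (algebraMap (PowerSeries k) (LaurentSeries k) PowerSeries.X) ^ (d i)) *
          (Matrix.GeneralLinearGroup.map
              (algebraMap (PowerSeries k) (LaurentSeries k)) k₂ :
            Matrix (Fin n) (Fin n) (LaurentSeries k)) := by
  have hX : Prime (PowerSeries.X : PowerSeries k) := PowerSeries.X_prime
  refine existsUnique_of_exists_of_unique (exists_decomposition hX.irreducible g) ?_
  rintro d d' ⟨hd, U, V, h⟩ ⟨hd', U', V', h'⟩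
  exact le_antisymm
    (exponents_le_of_decomposition hX hd' hd U' V' U V (h'.symm.trans h))
    (exponents_le_of_decomposition hX hd hd' U V U' V' (h.symm.trans h'))
end

section
/- Let p be a prime number and n a positive integer. Let H denote the image of GL_n(ℤ_p) in GL_n(ℚ_p) under the group homomorphism induced by the inclusion ℤ_p ⊆ ℚ_p. Then H is a compact subgroup of the topological group GL_n(ℚ_p), and H is a maximal compact subgroup: any subgroup K of GL_n(ℚ_p) that contains H and is compact (in the subspace topology) is equal to H. -/
/-!
Write `H` for the image of `GL_n(ℤ_p)`. It is compact because `GL_n(ℤ_p)` is the unit group of a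
compact Hausdorff topological monoid and the map to `GL_n(ℚ_p)` is continuous.

For maximality, let `K ⊇ H` be a compact subgroup. The norms of the entries of elements of `K` are
bounded; let `M` be their supremum. The point is that `‖g i j‖ ^ 2 ≤ M` for all `g ∈ K`, so that
`M ^ 2 ≤ M` and `M ≤ 1`. Off the diagonal this holds because the transvection `T = 1 + E_{ji}` lies
in `H`, and `(g i j) ^ 2 = (g E_{ji} g)_{ij} = (g T g)_{ij} - (g g)_{ij}` is a difference of two
entries of elements of `K`, whose norm is at most `M` by the ultrametric inequality
(`norm_sq_offDiag_le`). A diagonal entry is a difference of two off-diagonal ones, since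
`((1 + E_{ki}) g)_{ki} = g_{ki} + g_{ii}` (`norm_sq_le`); for `n = 1` it is squared directly.
Thus every `g ∈ K`, and also its inverse, has integral entries, that is, `g ∈ H`.
-/

theorem padic_norm_sub_le_max {p : ℕ} [Fact p.Prime] (x y : ℚ_[p]) :
    ‖x - y‖ ≤ max ‖x‖ ‖y‖ := by
  simpa [sub_eq_add_neg] using IsUltrametricDist.norm_add_le_max x (-y)

open Matrix in
theorem exists_mem_range_eq_transvection (p : ℕ) [Fact p.Prime] {n : ℕ} {i j : Fin n}
    (hij : i ≠ j) :
    ∃ t ∈ (Matrix.GeneralLinearGroup.map (n := Fin n) (PadicInt.Coe.ringHom (p := p))).range,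
      (t : Matrix (Fin n) (Fin n) ℚ_[p]) = 1 + Matrix.single i j 1 := by
  have hu : IsUnit (transvection i j (1 : ℤ_[p])) := by
    rw [Matrix.isUnit_iff_isUnit_det, det_transvection_of_ne _ _ hij]
    exact isUnit_one
  obtain ⟨u, hu⟩ := hu
  refine ⟨_, ⟨u, rfl⟩, ?_⟩
  ext a b
  rw [GeneralLinearGroup.map_apply, hu]
  simp only [transvection, Matrix.add_apply, map_add]
  congr 1
  · by_cases h : a = b <;> simp [Matrix.one_apply, h]
  · simp only [Matrix.single_apply]
    split_ifs <;> simp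

theorem mem_range_of_norm_le_one (p : ℕ) [Fact p.Prime] {n : ℕ} (g : GL (Fin n) ℚ_[p])
    (hg : ∀ i j, ‖g i j‖ ≤ 1) (hg' : ∀ i j, ‖g⁻¹ i j‖ ≤ 1) :
    g ∈ (Matrix.GeneralLinearGroup.map (n := Fin n) (PadicInt.Coe.ringHom (p := p))).range := by
  let A : Matrix (Fin n) (Fin n) ℤ_[p] := fun i j => ⟨g i j, hg i j⟩
  let B : Matrix (Fin n) (Fin n) ℤ_[p] := fun i j => ⟨g⁻¹ i j, hg' i j⟩
  have hinj : Function.Injective ((PadicInt.Coe.ringHom (p := p)).mapMatrix (m := Fin n)) :=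
    Matrix.map_injective Subtype.val_injective
  have hA : (PadicInt.Coe.ringHom (p := p)).mapMatrix A = g.val := by ext i j; rfl
  have hB : (PadicInt.Coe.ringHom (p := p)).mapMatrix B = g⁻¹.val := by ext i j; rfl
  refine ⟨⟨A, B, hinj ?_, hinj ?_⟩, ?_⟩
  · rw [map_mul, hA, hB, map_one, Units.mul_inv]
  · rw [map_mul, hA, hB, map_one, Units.inv_mul]
  · ext i j; rfl

section

variable {p : ℕ} [Fact p.Prime] {n : ℕ} {K : Subgroup (GL (Fin n) ℚ_[p])}
  (hK : (Matrix.GeneralLinearGroup.map (PadicInt.Coe.ringHom (p := p))).range ≤ K)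
  {M : ℝ} (hM : ∀ g ∈ K, ∀ i j, ‖g i j‖ ≤ M)
include hK hM

theorem norm_sq_offDiag_le {g : GL (Fin n) ℚ_[p]} (hg : g ∈ K) {i j : Fin n} (hij : i ≠ j) :
    ‖g i j‖ ^ 2 ≤ M := by
  obtain ⟨t, ht, htv⟩ := exists_mem_range_eq_transvection p hij.symm
  have h1 := hM _ (K.mul_mem (K.mul_mem hg (hK ht)) hg) i j
  have h2 := hM _ (K.mul_mem hg hg) i j
  have key : (g i j) ^ 2 = (g * t * g) i j - (g * g) i j := by
    simp only [Units.val_mul, htv, mul_add, add_mul, mul_one, Matrix.add_apply]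
    rw [add_sub_cancel_left, Matrix.mul_assoc, Matrix.mul_apply, Finset.sum_eq_single j]
    · simp [sq]
    · intro b _ hb
      simp [hb]
    · simp
  rw [← norm_pow, key]
  exact (padic_norm_sub_le_max _ _).trans (max_le h1 h2)

theorem norm_sq_le {g : GL (Fin n) ℚ_[p]} (hg : g ∈ K) (i j : Fin n) :
    ‖g i j‖ ^ 2 ≤ M := by
  by_cases hij : i = j
  · subst hij
    by_cases hk : ∃ k, k ≠ i
    · obtain ⟨k, hk⟩ := hk
      obtain ⟨t, ht, htv⟩ := exists_mem_range_eq_transvection p hk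
      have h1 := norm_sq_offDiag_le hK hM hg hk
      have h2 := norm_sq_offDiag_le hK hM (K.mul_mem (hK ht) hg) hk
      have key : g i i = (t * g) k i - g k i := by
        simp [Units.val_mul, htv, add_mul]
      have h3 : ‖g i i‖ ≤ max ‖(t * g) k i‖ ‖g k i‖ := by
        rw [key]
        exact padic_norm_sub_le_max _ _
      rcases le_max_iff.1 h3 with h | h
      · exact (pow_le_pow_left₀ (norm_nonneg _) h 2).trans h2
      · exact (pow_le_pow_left₀ (norm_nonneg _) h 2).trans h1
    · push Not at hk
      have key : (g i i) ^ 2 = (g * g) i i := by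
        rw [Units.val_mul, Matrix.mul_apply, Finset.sum_eq_single i]
        · rw [sq]
        · intro b _ hb
          exact absurd (hk b) hb
        · simp
      rw [← norm_pow, key]
      exact hM _ (K.mul_mem hg hg) i i
  · exact norm_sq_offDiag_le hK hM hg hij

end

open scoped MatrixGroups

/-- Let `p` be a prime and `n` a positive integer. The image `H` of `GL_n(ℤ_p)` in
`GL_n(ℚ_p)` (under the homomorphism induced by the inclusion `ℤ_p ⊆ ℚ_p`) is a compact
subgroup of the topological group `GL_n(ℚ_p)`, and it is a maximal compact subgroup: any
compact subgroup of `GL_n(ℚ_p)` containing `H` equals `H`. -/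
theorem glnZp_maximal_compact (p : ℕ) [Fact p.Prime] (n : ℕ) (hn : 0 < n) :
    IsCompact (((Matrix.GeneralLinearGroup.map (PadicInt.Coe.ringHom (p := p))).range :
        Subgroup (GL (Fin n) ℚ_[p])) : Set (GL (Fin n) ℚ_[p])) ∧
    ∀ K : Subgroup (GL (Fin n) ℚ_[p]),
      (Matrix.GeneralLinearGroup.map (PadicInt.Coe.ringHom (p := p))).range ≤ K →
      IsCompact (K : Set (GL (Fin n) ℚ_[p])) →
      K = (Matrix.GeneralLinearGroup.map (PadicInt.Coe.ringHom (p := p))).range := by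
  constructor
  · have hc : Continuous (PadicInt.Coe.ringHom (p := p)) := continuous_subtype_val
    have : CompactSpace (Matrix (Fin n) (Fin n) ℤ_[p]) :=
      inferInstanceAs (CompactSpace (Fin n → Fin n → ℤ_[p]))
    rw [MonoidHom.coe_range]
    exact isCompact_range hc.generalLinearGroup_map
  · intro K hK hcomp
    refine le_antisymm ?_ hK
    let S : Set ℝ := {x | ∃ g ∈ K, ∃ i j, x = ‖g i j‖}
    have hbdd : BddAbove S := by
      have hS : S = ⋃ i, ⋃ j, (fun g : GL (Fin n) ℚ_[p] => ‖g i j‖) '' K := by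
        ext x
        simp only [S, Set.mem_ofPred_eq, Set.mem_iUnion, Set.mem_image, SetLike.mem_coe]
        constructor
        · rintro ⟨g, hg, i, j, rfl⟩
          exact ⟨i, j, g, hg, rfl⟩
        · rintro ⟨i, j, g, hg, rfl⟩
          exact ⟨g, hg, i, j, rfl⟩
      rw [hS]
      refine (isCompact_iUnion fun i => isCompact_iUnion fun j => hcomp.image ?_).bddAbove
      exact (Units.continuous_val.matrix_elem i j).norm
    have hM : ∀ g ∈ K, ∀ i j, ‖g i j‖ ≤ sSup S := fun g hg i j =>
      le_csSup hbdd ⟨g, hg, i, j, rfl⟩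
    have hne : S.Nonempty := ⟨_, 1, K.one_mem, ⟨0, hn⟩, ⟨0, hn⟩, rfl⟩
    have hM0 : 0 ≤ sSup S := (norm_nonneg _).trans (hM 1 K.one_mem ⟨0, hn⟩ ⟨0, hn⟩)
    have hsqrt : sSup S ≤ √(sSup S) := by
      refine csSup_le hne ?_
      rintro x ⟨g, hg, i, j, rfl⟩
      exact Real.le_sqrt_of_sq_le (norm_sq_le hK hM hg i j)
    have hle : sSup S ≤ 1 := by
      have hsq := (Real.le_sqrt hM0 hM0).1 hsqrt
      nlinarith
    intro g hg
    exact mem_range_of_norm_le_one p g (fun i j => (hM g hg i j).trans hle)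
      (fun i j => (hM _ (K.inv_mem hg) i j).trans hle)
end
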